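/- For every d ≥ 1 there is a constant C = C(d) such that for every n ≥ 2 and every finite set A ⊆ ℤ^d with |A| = n, ē(A) ≤ e_o(B_n) + C n^{2/d − γ_d} (log n)², where γ_1 = 1, γ_2 = 1/3, and γ_d = 2^{−d}/(2d² log 3) for d ≥ 3. -/

import Mathlib

open scoped BigOperators Pointwise symmDiff
open MeasureTheory Filter

noncomputable section
open scoped Classical
namespace RotorRouterPaper

/-- Sites of the lattice `ℤ^d`. -/
abbrev Site (d : ℕ) := Fin d → ℤ

/-- The `i`-th standard basis vector of `ℤ^d`. -/
def unitVec (d : ℕ) (i : Fin d) : Site d := fun j => if j = i then 1 else 0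

/-- Squared Euclidean norm of a lattice point. -/
def nsq {d : ℕ} (x : Site d) : ℝ := ∑ i, ((x i : ℝ)) ^ 2

/-- Euclidean norm of a lattice point. -/
def enorm {d : ℕ} (x : Site d) : ℝ := Real.sqrt (nsq x)

/-- Adjacency `x ∼ y`: Euclidean distance one. -/
def Adj {d : ℕ} (x y : Site d) : Prop := nsq (x - y) = 1

/-- `ω_d`, the Lebesgue volume of the unit ball in `ℝ^d`. -/
def ballVol (d : ℕ) : ℝ := (volume (Metric.ball (0 : EuclideanSpace ℝ (Fin d)) 1)).toReal

/-- The lattice ball `B_n = {y ∈ ℤ^d : ω_d ‖y‖^d < n}`. -/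
def lball (d n : ℕ) : Set (Site d) := {y | ballVol d * enorm y ^ d < (n : ℝ)}

/-- Characterization of the expected exit time function of a (finite) region `A ⊆ ℤ^d`:
it vanishes off `A` and its discrete Laplacian is `-1` on `A`. -/
def IsExitFun (d : ℕ) (A : Set (Site d)) (e : Site d → ℝ) : Prop :=
  (∀ x, x ∉ A → e x = 0) ∧
  ∀ x ∈ A, (1 / (2 * (d : ℝ))) * (∑ i, (e (x + unitVec d i) + e (x - unitVec d i))) - e x = -1

/-- The expected exit time function `x ↦ e_x(A)` (the unique function satisfying
`IsExitFun` when `A` is finite). -/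
def exitFun (d : ℕ) (A : Set (Site d)) : Site d → ℝ :=
  if h : ∃ e, IsExitFun d A e then h.choose else 0

/-- `ē(A) = sup_x e_x(A)`. -/
def ebar (d : ℕ) (A : Set (Site d)) : ℝ := sSup (Set.range (exitFun d A))

/-- `φ(n) = sup {ē(A) - e_o(B_n) : A ⊆ ℤ^d, |A| = n}`. -/
def phi (d n : ℕ) : ℝ :=
  sSup {t | ∃ A : Set (Site d), A.Finite ∧ A.ncard = n ∧ t = ebar d A - exitFun d (lball d n) 0}

/-- `Φ(n) = ∑_{j=1}^n φ(j)`. -/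
def PhiSum (d n : ℕ) : ℝ := ∑ j ∈ Finset.Icc 1 n, phi d j

/-- `ψ(A) = ∑_{x ∈ A} ‖x‖²`. -/
def psi {d : ℕ} (A : Set (Site d)) : ℝ := ∑ᶠ x ∈ A, nsq x

/-- A cardinal direction in `ℤ^d`: one of `±e_1, …, ±e_d`. -/
abbrev Dir (d : ℕ) := Fin d × Bool

/-- The lattice step vector of a cardinal direction. -/
def dirVec (d : ℕ) (ε : Dir d) : Site d := if ε.2 then unitVec d ε.1 else -unitVec d ε.1

/-- A configuration of rotor stacks `r` (with `r x i` the direction used for the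
`(i+1)`-st visit to `x`) has discrepancy at most `D` if for every site, direction and `m ≥ 1`,
among the first `m` rotors of the stack each direction occurs `m/(2d)` times up to error `D`. -/
def HasDiscrepancy (d : ℕ) (D : ℝ) (r : Site d → ℕ → Dir d) : Prop :=
  ∀ (x : Site d) (ε : Dir d) (m : ℕ), 1 ≤ m →
    |(({i | i < m ∧ r x i = ε} : Set ℕ).ncard : ℝ) - (m : ℝ) / (2 * (d : ℝ))| ≤ D

/-- One step of rotor-router walk on a state (current position, visit counts so far):
the particle at `p` being visited for the `(c p + 1)`-st time moves in direction
`r p (c p)` and the visit count at `p` increases by one. -/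
def rstep {d : ℕ} (r : Site d → ℕ → Dir d) (s : Site d × (Site d → ℕ)) :
    Site d × (Site d → ℕ) :=
  (s.1 + dirVec d (r s.1 (s.2 s.1)), Function.update s.2 s.1 (s.2 s.1 + 1))

/-- The state after `t` steps of rotor-router walk started at the origin with visit counts `c`. -/
def walkState {d : ℕ} (r : Site d → ℕ → Dir d) (c : Site d → ℕ) (t : ℕ) :
    Site d × (Site d → ℕ) :=
  (rstep r)^[t] (0, c)

/-- The number of steps until the rotor-router walk started at the origin
(with carried-over visit counts `c`) first leaves the region `A`. -/
def exitSteps {d : ℕ} (r : Site d → ℕ → Dir d) (A : Set (Site d)) (c : Site d → ℕ) : ℕ :=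
  sInf {t | (walkState r c t).1 ∉ A}

/-- The state of rotor-router aggregation after `n` particles have walked and settled:
`(aggState r n).1` is the occupied region `A_{n+1}`, `(aggState r n).2.1` the accumulated
visit counts, and `(aggState r n).2.2` the total number `T_n` of steps taken so far. -/
def aggState {d : ℕ} (r : Site d → ℕ → Dir d) : ℕ → Set (Site d) × (Site d → ℕ) × ℕ
  | 0 => ({0}, fun _ => 0, 0)
  | n + 1 =>
      let s := aggState r n
      let τ := exitSteps r s.1 s.2.1
      (insert (walkState r s.2.1 τ).1 s.1, (walkState r s.2.1 τ).2, s.2.2 + τ)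

/-- The region `A_n` of rotor-router aggregation (for `n ≥ 1`). -/
def aggRegion {d : ℕ} (r : Site d → ℕ → Dir d) (n : ℕ) : Set (Site d) :=
  (aggState r (n - 1)).1

/-- `T_n`, the total number of steps taken by the first `n` particles. -/
def totalSteps {d : ℕ} (r : Site d → ℕ → Dir d) (n : ℕ) : ℕ := (aggState r n).2.2

/-- `A^□ = A + [-1/2,1/2]^d ⊆ ℝ^d`. -/
def box (d : ℕ) (A : Set (Site d)) : Set (EuclideanSpace ℝ (Fin d)) :=
  {z | ∃ x ∈ A, ∀ i, |z i - (x i : ℝ)| ≤ 1 / 2}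

/-- The closed Euclidean ball of unit volume centered at the origin of `ℝ^d`. -/
def unitVolBall (d : ℕ) : Set (EuclideanSpace ℝ (Fin d)) :=
  Metric.closedBall 0 (ballVol d ^ (-(1 : ℝ) / (d : ℝ)))

/-- `A ⊆ ℤ^d` is orthoconvex if every line parallel to a coordinate axis meets `A`
in an interval. -/
def Orthoconvex (d : ℕ) (A : Set (Site d)) : Prop :=
  ∀ x ∈ A, ∀ i : Fin d, ∀ k : ℤ, 0 < k → x + k • unitVec d i ∈ A →
    ∀ j : ℤ, 0 < j → j < k → x + j • unitVec d i ∈ A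

/-- The nonnegative orthant `Q ⊆ ℤ^d`. -/
def orthant (d : ℕ) : Set (Site d) := {x | ∀ i, 0 ≤ x i}

/-- The cube `C(o,r) = {x : ‖x‖_∞ ≤ r}`. -/
def cubeSet (d : ℕ) (r : ℕ) : Set (Site d) := {x | ∀ i, |x i| ≤ (r : ℤ)}

/-- The boundary `∂C(o,r) = {x : ‖x‖_∞ = r + 1 and x ∼ y for some y ∈ C(o,r)}`. -/
def cubeBdry (d : ℕ) (r : ℕ) : Set (Site d) :=
  {x | (∀ i, |x i| ≤ (r : ℤ) + 1) ∧ (∃ i, |x i| = (r : ℤ) + 1) ∧ ∃ y ∈ cubeSet d r, Adj x y}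

/-- Characterization of `h_r(x) = P_x(T_Q > T_{∂C(o,r)})`: it vanishes on
`Q ∩ (C(o,r) ∪ ∂C(o,r))`, equals `1` on `∂C(o,r) ∖ Q`, is discrete harmonic on
`C(o,r) ∖ Q`, and (as a normalization) vanishes off `C(o,r) ∪ ∂C(o,r)`. -/
def IsOrthHarm (d : ℕ) (r : ℕ) (h : Site d → ℝ) : Prop :=
  (∀ x, x ∉ cubeSet d r ∪ cubeBdry d r → h x = 0) ∧
  (∀ x ∈ orthant d ∩ (cubeSet d r ∪ cubeBdry d r), h x = 0) ∧
  (∀ x ∈ cubeBdry d r \ orthant d, h x = 1) ∧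
  (∀ x ∈ cubeSet d r \ orthant d,
    h x = (1 / (2 * (d : ℝ))) * ∑ i, (h (x + unitVec d i) + h (x - unitVec d i)))

/-- The function `h_r` of the previous characterization. -/
def orthHarm (d : ℕ) (r : ℕ) : Site d → ℝ :=
  if h : ∃ f, IsOrthHarm d r f then h.choose else 0

/-- `p(k,r) = sup {h_r(x) : ‖x‖_∞ ≤ k}`. -/
def pkr (d k r : ℕ) : ℝ :=
  sSup {t | ∃ x : Site d, (∀ i, |x i| ≤ (k : ℤ)) ∧ t = orthHarm d r x}

/-- The exponent `γ_d` of Theorem 3.1. -/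
def gam (d : ℕ) : ℝ :=
  if d = 1 then 1 else if d = 2 then 1 / 3
  else (2 : ℝ) ^ (-(d : ℝ)) / (2 * (d : ℝ) ^ 2 * Real.log 3)



/-! ### Part 1: lattice -/

def lap {d : ℕ} (f : Site d → ℝ) (x : Site d) : ℝ :=
  (1 / (2 * (d : ℝ))) * (∑ i, (f (x + unitVec d i) + f (x - unitVec d i))) - f x

lemma lap_sub {d : ℕ} (f g : Site d → ℝ) (x : Site d) :
    lap (fun y => f y - g y) x = lap f x - lap g x := by
  unfold lap
  have : ∑ i, ((f (x + unitVec d i) - g (x + unitVec d i)) + (f (x - unitVec d i) - g (x - unitVec d i)))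
    = ∑ i, (f (x + unitVec d i) + f (x - unitVec d i)) - ∑ i, (g (x + unitVec d i) + g (x - unitVec d i)) := by
    rw [← Finset.sum_sub_distrib]; exact Finset.sum_congr rfl fun i _ => by ring
  rw [this]; ring

/-- Minimum principle. -/
lemma min_principle {d : ℕ} (hd : 1 ≤ d) {A : Set (Site d)} (hA : A.Finite) (f : Site d → ℝ)
    (h1 : ∀ x ∈ A, lap f x ≤ 0) (h2 : ∀ x, x ∉ A → 0 ≤ f x) (x : Site d) : 0 ≤ f x := by
  by_contra hx
  push Not at hx
  have hxA : x ∈ A := by by_contra h; exact absurd (h2 x h) (not_le.mpr hx)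
  obtain ⟨z, hzA, hz⟩ := hA.exists_minimalFor f A ⟨x, hxA⟩ |>.imp fun a h => h
  have hzmin : ∀ y, f z ≤ f y := by
    have hzx : f z ≤ f x := by
      rcases le_total (f z) (f x) with h | h
      · exact h
      · exact hz hxA h
    intro y
    by_cases hy : y ∈ A
    · rcases le_total (f z) (f y) with h | h
      · exact h
      · exact hz hy h
    · linarith [h2 y hy]
  have hz0 : f z < 0 := lt_of_le_of_lt (hzmin x) hx
  set i0 : Fin d := ⟨0, hd⟩
  set S : Set (Site d) := {y | y ∈ A ∧ f y = f z}
  have hS : S.Finite := hA.subset fun y hy => hy.1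
  obtain ⟨w, ⟨hwA, hwz⟩, hw⟩ := hS.exists_maximalFor (fun y => y i0) S ⟨z, hzA, rfl⟩
  have hlap := h1 w hwA
  have hd0 : (0:ℝ) < d := by exact_mod_cast hd
  have hsum : ∑ i, (f (w + unitVec d i) + f (w - unitVec d i)) ≤ ∑ i : Fin d, (2 * f z) := by
    unfold lap at hlap
    have : (∑ i, (f (w + unitVec d i) + f (w - unitVec d i))) ≤ 2 * d * f z := by
      rw [hwz] at hlap
      have h3 : (1 / (2 * (d : ℝ))) * (∑ i, (f (w + unitVec d i) + f (w - unitVec d i))) ≤ f z := by linarith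
      rw [one_div, inv_mul_le_iff₀ (by positivity)] at h3
      linarith
    simpa [Finset.sum_const, mul_comm, mul_left_comm, mul_assoc] using this
  have heq : ∀ i ∈ Finset.univ, (2 * f z) = (f (w + unitVec d i) + f (w - unitVec d i)) := by
    rw [← Finset.sum_eq_sum_iff_of_le]
    · apply le_antisymm _ hsum
      exact Finset.sum_le_sum fun i _ => by linarith [hzmin (w + unitVec d i), hzmin (w - unitVec d i)]
    · exact fun i _ => by linarith [hzmin (w + unitVec d i), hzmin (w - unitVec d i)]
  have h5 := heq i0 (Finset.mem_univ _)
  have h6 : f (w + unitVec d i0) = f z := by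
    linarith [hzmin (w + unitVec d i0), hzmin (w - unitVec d i0)]
  have h7 : w + unitVec d i0 ∈ A := by
    by_contra h
    linarith [h2 _ h]
  have h8 := hw (j := w + unitVec d i0) ⟨h7, h6⟩ (by simp [unitVec])
  simp [unitVec] at h8

lemma exists_exitFun {d : ℕ} (hd : 1 ≤ d) {A : Set (Site d)} (hA : A.Finite) :
    ∃ e, IsExitFun d A e := by
  have : Fintype A := hA.fintype
  let ext : (A → ℝ) →ₗ[ℝ] (Site d → ℝ) :=
    { toFun := fun f x => if h : x ∈ A then f ⟨x, h⟩ else 0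
      map_add' := by intro f g; funext x; by_cases h : x ∈ A <;> simp [h]
      map_smul' := by intro c f; funext x; by_cases h : x ∈ A <;> simp [h] }
  let T : (A → ℝ) →ₗ[ℝ] (A → ℝ) :=
    { toFun := fun f a => lap (ext f) a
      map_add' := by
        intro f g; funext x
        simp only [lap, map_add, Pi.add_apply]
        have : ∑ i, ((ext f) (↑x + unitVec d i) + (ext g) (↑x + unitVec d i) + ((ext f) (↑x - unitVec d i) + (ext g) (↑x - unitVec d i)))
          = ∑ i, ((ext f) (↑x + unitVec d i) + (ext f) (↑x - unitVec d i)) + ∑ i, ((ext g) (↑x + unitVec d i) + (ext g) (↑x - unitVec d i)) := by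
          rw [← Finset.sum_add_distrib]; exact Finset.sum_congr rfl fun i _ => by ring
        rw [this]; ring
      map_smul' := by
        intro c f; funext x
        simp only [lap, map_smul, Pi.smul_apply, smul_eq_mul, RingHom.id_apply]
        have : ∑ i, (c * (ext f) (↑x + unitVec d i) + c * (ext f) (↑x - unitVec d i))
          = c * ∑ i, ((ext f) (↑x + unitVec d i) + (ext f) (↑x - unitVec d i)) := by
          rw [Finset.mul_sum]; exact Finset.sum_congr rfl fun i _ => by ring
        rw [this]; ring }
  have hext0 : ∀ f x, x ∉ A → ext f x = 0 := fun f x hx => by simp [ext, hx]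
  have hinj : Function.Injective T := by
    have key : ∀ f, T f = 0 → ∀ x, 0 ≤ ext f x := by
      intro f hf
      refine min_principle hd hA _ (fun x hx => ?_) (fun x hx => (hext0 f x hx).ge)
      have := congrFun hf ⟨x, hx⟩
      exact le_of_eq this
    rw [← LinearMap.ker_eq_bot, LinearMap.ker_eq_bot']
    intro f hf
    funext a
    have h1 := key f hf a
    have h2 := key (-f) (by rw [map_neg, hf, neg_zero]) a
    simp [ext] at h1 h2
    exact le_antisymm h2 h1
  obtain ⟨f, hf⟩ := (LinearMap.injective_iff_surjective.mp hinj) (fun _ => -1)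
  exact ⟨ext f, fun x hx => hext0 f x hx, fun x hx => congrFun hf ⟨x, hx⟩⟩

lemma exitFun_spec {d : ℕ} (hd : 1 ≤ d) {A : Set (Site d)} (hA : A.Finite) :
    IsExitFun d A (exitFun d A) := by
  unfold exitFun
  rw [dif_pos (exists_exitFun hd hA)]
  exact (exists_exitFun hd hA).choose_spec

lemma exitFun_nonneg {d : ℕ} (hd : 1 ≤ d) {A : Set (Site d)} (hA : A.Finite) (x : Site d) :
    0 ≤ exitFun d A x := by
  have h := exitFun_spec hd hA
  exact min_principle hd hA _ (fun x hx => by have := h.2 x hx; unfold lap; linarith)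
    (fun x hx => (h.1 x hx).ge) x

lemma lap_nsq {d : ℕ} (hd : 1 ≤ d) (c : ℝ) (x : Site d) : lap (fun y => c - nsq y) x = -1 := by
  have hd0 : (0:ℝ) < d := by exact_mod_cast hd
  have key : ∀ i, (c - nsq (x + unitVec d i)) + (c - nsq (x - unitVec d i)) = 2 * (c - nsq x) - 2 := by
    intro i
    have : nsq (x + unitVec d i) + nsq (x - unitVec d i) = 2 * nsq x + 2 := by
      unfold nsq
      rw [← Finset.sum_add_distrib]
      have : ∀ j, (((x + unitVec d i) j : ℤ) : ℝ) ^ 2 + (((x - unitVec d i) j : ℤ) : ℝ) ^ 2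
        = 2 * (x j : ℝ) ^ 2 + (if j = i then 2 else 0) := by
        intro j
        simp only [Pi.add_apply, Pi.sub_apply, unitVec]
        split_ifs <;> push_cast <;> ring
      rw [Finset.sum_congr rfl fun j _ => this j, Finset.sum_add_distrib, Finset.mul_sum]
      simp
    linarith
  unfold lap
  rw [Finset.sum_congr rfl fun i _ => key i]
  simp
  field_simp
  ring

lemma ballVol_pos (d : ℕ) : 0 < ballVol d := by
  unfold ballVol
  exact ENNReal.toReal_pos (Metric.measure_ball_pos _ _ one_pos).ne' measure_ball_lt_top.ne

lemma nsq_nonneg {d : ℕ} (x : Site d) : 0 ≤ nsq x := Finset.sum_nonneg fun i _ => sq_nonneg _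

def radius (d : ℕ) (k : ℝ) : ℝ := (k / ballVol d) ^ (1 / (d : ℝ))

lemma radius_nonneg (d : ℕ) {k : ℝ} (hk : 0 ≤ k) : 0 ≤ radius d k :=
  Real.rpow_nonneg (div_nonneg hk (ballVol_pos d).le) _

lemma radius_pow {d : ℕ} (hd : 1 ≤ d) {k : ℝ} (hk : 0 ≤ k) : ballVol d * radius d k ^ d = k := by
  unfold radius
  rw [one_div, Real.rpow_inv_natCast_pow (div_nonneg hk (ballVol_pos d).le) (by omega)]
  field_simp [(ballVol_pos d).ne']

lemma mem_lball_iff {d : ℕ} (hd : 1 ≤ d) (n : ℕ) (y : Site d) :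
    y ∈ lball d n ↔ nsq y < radius d n ^ 2 := by
  have hr := radius_nonneg d (Nat.cast_nonneg (α := ℝ) n)
  have h1 : nsq y = enorm y ^ 2 := (Real.sq_sqrt (nsq_nonneg y)).symm
  have h2 : 0 ≤ enorm y := Real.sqrt_nonneg _
  show ballVol d * enorm y ^ d < (n : ℝ) ↔ _
  rw [h1]
  conv_lhs => rw [← radius_pow hd (Nat.cast_nonneg (α := ℝ) n)]
  rw [mul_lt_mul_iff_right₀ (ballVol_pos d), pow_lt_pow_iff_left₀ h2 hr (by omega),
    pow_lt_pow_iff_left₀ h2 hr (by omega)]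

lemma lball_finite {d : ℕ} (hd : 1 ≤ d) (n : ℕ) : (lball d n).Finite := by
  obtain ⟨M, hM⟩ := exists_nat_gt (radius d n)
  have hr := radius_nonneg d (Nat.cast_nonneg (α := ℝ) n)
  refine (Set.finite_Icc (fun _ => -(M:ℤ) : Site d) (fun _ => (M : ℤ))).subset ?_
  intro y hy
  rw [mem_lball_iff hd] at hy
  have h : ∀ i, |(y i : ℝ)| ≤ M := by
    intro i
    have : (y i : ℝ)^2 ≤ nsq y := Finset.single_le_sum (f := fun i => (y i : ℝ)^2) (fun i _ => sq_nonneg _) (Finset.mem_univ i)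
    apply le_trans (abs_le_of_sq_le_sq (b := radius d n) (by linarith) hr) hM.le
  constructor <;> intro i <;> have := abs_le.mp (h i)
  · have := this.1; exact_mod_cast this
  · have := this.2; exact_mod_cast this

lemma exitFun_lball_ge {d : ℕ} (hd : 1 ≤ d) (n : ℕ) :
    radius d n ^ 2 ≤ exitFun d (lball d n) 0 := by
  have hA := lball_finite hd n
  have h := exitFun_spec hd hA
  have := min_principle hd hA (fun y => exitFun d (lball d n) y - (radius d n ^ 2 - nsq y))
    (fun x hx => by
      rw [lap_sub, lap_nsq hd]
      have := h.2 x hx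
      unfold lap; linarith)
    (fun x hx => by
      rw [h.1 x hx]
      rw [mem_lball_iff hd] at hx
      linarith) 0
  have h0 : nsq (0 : Site d) = 0 := by simp [nsq]
  simp only [h0] at this
  linarith

/-- discrete Dirichlet difference -/
def Dl {d : ℕ} (f : Site d → ℝ) (z : Site d) : ℝ := ∑' x, (f (x + z) - f x) ^ 2

lemma summ {d : ℕ} {A : Set (Site d)} (hA : A.Finite) {f : Site d → ℝ} (hf : ∀ x, x ∉ A → f x = 0) :
    Summable f :=
  summable_of_hasFiniteSupport (hA.subset fun x hx => by by_contra h; exact hx (hf x h))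

lemma shift_finite {d : ℕ} {A : Set (Site d)} (hA : A.Finite) (z : Site d) :
    (A ∪ (fun x => x - z) '' A).Finite := hA.union (hA.image _)

lemma not_mem_shift {d : ℕ} {A : Set (Site d)} {z x : Site d} (h : x ∉ A ∪ (fun x => x - z) '' A) :
    x ∉ A ∧ x + z ∉ A := by
  constructor
  · exact fun h' => h (Or.inl h')
  · exact fun h' => h (Or.inr ⟨_, h', by simp⟩)

lemma trunc_energy {d : ℕ} (hd : 1 ≤ d) {A : Set (Site d)} (hA : A.Finite) {e : Site d → ℝ}
    (he : IsExitFun d A e) {t : ℝ} (ht : 0 ≤ t) :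
    (1 / (2 * (d : ℝ))) * ∑ i, Dl (fun x => max (e x - t) 0) (unitVec d i) ≤ ∑' x, max (e x - t) 0 := by
  have hd0 : (0:ℝ) < d := by exact_mod_cast hd
  set f : Site d → ℝ := fun x => max (e x - t) 0 with hfdef
  have hf : ∀ x, x ∉ A → f x = 0 := by
    intro x hx; simp [hfdef, he.1 x hx, ht]
  have h1 : ∀ i, Dl f (unitVec d i) ≤ ∑' x, f x * (2 * e x - (e (x + unitVec d i) + e (x - unitVec d i))) := by
    intro i
    set u := unitVec d i
    have hp : ∀ x, (f (x + u) - f x) ^ 2 ≤ f (x + u) * (e (x + u) - e x) - f x * (e (x + u) - e x) := by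
      intro x
      simp only [hfdef]
      rcases max_cases (e (x+u) - t) 0 with ⟨h, h'⟩ | ⟨h, h'⟩ <;> rcases max_cases (e x - t) 0 with ⟨k, k'⟩ | ⟨k, k'⟩ <;> rw [h, k] <;> nlinarith
    have hs1 : Summable fun x => f (x + u) * (e (x + u) - e x) :=
      summ (shift_finite hA u) fun x hx => by rw [hf _ (not_mem_shift hx).2]; ring
    have hs2 : Summable fun x => f x * (e (x + u) - e x) :=
      summ (shift_finite hA u) fun x hx => by rw [hf _ (not_mem_shift hx).1]; ring
    have hs0 : Summable fun x => (f (x + u) - f x) ^ 2 :=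
      summ (shift_finite hA u) fun x hx => by rw [hf _ (not_mem_shift hx).1, hf _ (not_mem_shift hx).2]; ring
    have hs3 : Summable fun x => f x * (e x - e (x - u)) :=
      summ hA fun x hx => by rw [hf _ hx]; ring
    have e1 : ∑' x, f (x + u) * (e (x + u) - e x) = ∑' x, f x * (e x - e (x - u)) := by
      rw [← Equiv.tsum_eq (Equiv.addRight u) (fun x => f x * (e x - e (x - u)))]
      simp
    calc Dl f u ≤ ∑' x, (f (x + u) * (e (x + u) - e x) - f x * (e (x + u) - e x)) :=
          hs0.tsum_le_tsum hp (hs1.sub hs2)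
      _ = ∑' x, (f x * (e x - e (x - u)) - f x * (e (x + u) - e x)) := by
          rw [hs1.tsum_sub hs2, e1, hs3.tsum_sub hs2]
      _ = _ := tsum_congr fun x => by ring
  have hs : ∀ i ∈ Finset.univ, Summable fun x => f x * (2 * e x - (e (x + unitVec d i) + e (x - unitVec d i))) :=
    fun i _ => summ hA fun x hx => by rw [hf _ hx]; ring
  calc (1 / (2 * (d : ℝ))) * ∑ i, Dl f (unitVec d i)
      ≤ (1 / (2 * (d : ℝ))) * ∑ i, ∑' x, f x * (2 * e x - (e (x + unitVec d i) + e (x - unitVec d i))) := by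
        gcongr with i; exact h1 i
    _ = ∑' x, (1 / (2 * (d : ℝ))) * ∑ i, f x * (2 * e x - (e (x + unitVec d i) + e (x - unitVec d i))) := by
        rw [← Summable.tsum_finsetSum hs, tsum_mul_left]
    _ = ∑' x, f x := by
        refine tsum_congr fun x => ?_
        by_cases hx : x ∈ A
        · have := he.2 x hx
          rw [← Finset.mul_sum, Finset.sum_sub_distrib]
          simp only [Finset.sum_const, Finset.card_univ, Fintype.card_fin, nsmul_eq_mul]
          have h2 : (1 / (2 * (d : ℝ))) * (f x * (d * (2 * e x) - ∑ i, (e (x + unitVec d i) + e (x - unitVec d i))))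
            = f x * (e x - (1 / (2 * (d : ℝ))) * ∑ i, (e (x + unitVec d i) + e (x - unitVec d i))) := by
            field_simp
          rw [h2]
          have : e x - (1 / (2 * (d : ℝ))) * ∑ i, (e (x + unitVec d i) + e (x - unitVec d i)) = 1 := by linarith
          rw [this, mul_one]
        · simp [hf x hx]



/-! ### Part 2: polarization -/

abbrev Vd (d : ℕ) := EuclideanSpace ℝ (Fin d)

def refl {d : ℕ} (n : Vd d) (c : ℝ) (x : Vd d) : Vd d := x + (2 * (c - inner ℝ n x)) • n

lemma inner_refl {d : ℕ} {n : Vd d} (hn : ‖n‖ = 1) (c : ℝ) (x : Vd d) :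
    inner ℝ n (refl n c x) = 2 * c - inner ℝ n x := by
  unfold refl
  rw [inner_add_right, inner_smul_right, real_inner_self_eq_norm_sq, hn]; ring

lemma refl_refl {d : ℕ} {n : Vd d} (hn : ‖n‖ = 1) (c : ℝ) (x : Vd d) :
    refl n c (refl n c x) = x := by
  have := inner_refl hn c x
  conv_lhs => unfold refl
  rw [show x + (2 * (c - inner ℝ n x)) • n = refl n c x from rfl, this]
  unfold refl
  rw [add_assoc, ← add_smul]
  ring_nf; simp

lemma norm_refl_sub {d : ℕ} {n : Vd d} (hn : ‖n‖ = 1) (c : ℝ) (x y : Vd d) :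
    ‖refl n c x - y‖ ^ 2 = ‖x - y‖ ^ 2 + 4 * (c - inner ℝ n x) * (c - inner ℝ n y) := by
  have : refl n c x - y = (x - y) + (2 * (c - inner ℝ n x)) • n := by unfold refl; abel
  rw [this, norm_add_sq_real, inner_smul_right, norm_smul, hn, inner_sub_left, real_inner_comm n x,
    real_inner_comm n y, mul_one, Real.norm_eq_abs, sq_abs]
  ring

lemma norm_refl_sub_refl {d : ℕ} {n : Vd d} (hn : ‖n‖ = 1) (c : ℝ) (x y : Vd d) :
    ‖refl n c x - refl n c y‖ = ‖x - y‖ := by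
  have h := norm_refl_sub hn c x (refl n c y)
  rw [norm_sub_rev x, norm_refl_sub hn c y x, inner_refl hn, norm_sub_rev y x] at h
  rw [← sq_eq_sq₀ (norm_nonneg _) (norm_nonneg _), h]; ring

lemma norm_refl_sub_comm {d : ℕ} {n : Vd d} (hn : ‖n‖ = 1) (c : ℝ) (x y : Vd d) :
    ‖refl n c x - y‖ = ‖x - refl n c y‖ := by
  rw [← norm_refl_sub_refl hn c, refl_refl hn]

lemma norm_refl_sq {d : ℕ} {n : Vd d} (hn : ‖n‖ = 1) (c : ℝ) (x : Vd d) :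
    ‖refl n c x‖ ^ 2 = ‖x‖ ^ 2 + 4 * c * (c - inner ℝ n x) := by
  have := norm_refl_sub hn c x 0
  simp at this; rw [this]; ring

lemma refl_mp {d : ℕ} {n : Vd d} (hn : ‖n‖ = 1) (c : ℝ) :
    MeasurePreserving (refl n c) volume volume := by
  have h1 : MeasurePreserving (fun x : Vd d => (ℝ ∙ n)ᗮ.reflection x) volume volume :=
    LinearIsometryEquiv.measurePreserving _
  have h2 := (measurePreserving_add_right (volume : Measure (Vd d)) ((2 * c) • n)).comp h1
  convert h2 using 1
  funext x
  simp only [Function.comp, refl, Submodule.reflection_orthogonal_apply, Submodule.reflection_singleton_apply, hn]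
  simp only [RCLike.ofReal_one, one_pow, div_one, mul_sub, sub_smul, two_smul, add_smul, two_mul]
  norm_num [two_mul, add_smul]
  abel

def polar {d : ℕ} (n : Vd d) (c : ℝ) (F : Vd d → ℝ) (x : Vd d) : ℝ :=
  if inner ℝ n x ≤ c then max (F x) (F (refl n c x)) else min (F x) (F (refl n c x))

structure Adm {d : ℕ} (L M : ℝ) (F : Vd d → ℝ) : Prop where
  meas : Measurable F
  nonneg : ∀ x, 0 ≤ F x
  le : ∀ x, F x ≤ M
  supp : ∀ x, L ≤ ‖x‖ → F x = 0

lemma refl_cases {d : ℕ} {n : Vd d} (hn : ‖n‖ = 1) (c : ℝ) (P : Vd d → Vd d → Prop)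
    (hsymm : ∀ x y, P x y → P y x)
    (h : ∀ x, inner ℝ n x < c → ¬ inner ℝ n (refl n c x) ≤ c → P x (refl n c x))
    (h0 : ∀ x, inner ℝ n x ≤ c → refl n c x = x → P x x) (x : Vd d) : P x (refl n c x) := by
  rcases lt_trichotomy (inner ℝ n x) c with hx | hx | hx
  · refine h x hx ?_
    rw [inner_refl hn]; linarith
  · have : refl n c x = x := by unfold refl; rw [hx]; simp
    rw [this]
    exact h0 x hx.le this
  · apply hsymm
    have := h (refl n c x) (by rw [inner_refl hn]; linarith) (by rw [refl_refl hn]; linarith)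
    rwa [refl_refl hn] at this

lemma int_le_of_pair {d : ℕ} {n : Vd d} (hn : ‖n‖ = 1) (c : ℝ) {g h : Vd d → ℝ}
    (hg : Integrable g) (hh : Integrable h)
    (H : ∀ x, g x + g (refl n c x) ≤ h x + h (refl n c x)) : ∫ x, g x ≤ ∫ x, h x := by
  have mp := refl_mp hn c
  have me : MeasurableEmbedding (refl n c) := by
    let e : Vd d ≃ᵐ Vd d := ⟨⟨refl n c, refl n c, refl_refl hn c, refl_refl hn c⟩, mp.measurable, mp.measurable⟩
    exact e.measurableEmbedding
  have e1 : ∀ k : Vd d → ℝ, ∫ x, k (refl n c x) = ∫ x, k x := fun k => mp.integral_comp me k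
  have i1 : ∀ k : Vd d → ℝ, Integrable k → Integrable (fun x => k (refl n c x)) := fun k hk =>
    (mp.integrable_comp_emb me).mpr hk
  have := integral_mono (hg.add (i1 g hg)) (hh.add (i1 h hh)) H
  simp only [Pi.add_apply] at this
  rw [integral_add hg (i1 g hg), integral_add hh (i1 h hh), e1, e1] at this
  linarith

lemma integrable_bdd {E : Type*} [NormedAddCommGroup E] [MeasurableSpace E] [BorelSpace E] [ProperSpace E]
    (μ : Measure E) [IsFiniteMeasureOnCompacts μ] {g : E → ℝ} (hg : Measurable g) (C K : ℝ)
    (hC : ∀ x, |g x| ≤ C) (hK : ∀ x, K ≤ ‖x‖ → g x = 0) : Integrable g μ := by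
  have h1 : IntegrableOn g (Metric.closedBall 0 K) μ :=
    Measure.integrableOn_of_bounded (M := C) (isCompact_closedBall (0:E) K).measure_lt_top.ne
      hg.aestronglyMeasurable (Eventually.of_forall hC)
  refine h1.integrable_of_forall_notMem_eq_zero ?_
  intro x hx
  apply hK
  simp at hx
  exact hx.le

lemma Adm.integrable {d : ℕ} {L M : ℝ} {F : Vd d → ℝ} (h : Adm L M F) : Integrable F :=
  integrable_bdd volume h.meas M L (fun x => by rw [abs_of_nonneg (h.nonneg x)]; exact h.le x) h.supp

lemma measurable_refl {d : ℕ} (n : Vd d) (c : ℝ) : Measurable (refl n c) := by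
  unfold refl; fun_prop

lemma Adm.polar {d : ℕ} {L M : ℝ} {F : Vd d → ℝ} (h : Adm L M F) {n : Vd d} (hn : ‖n‖ = 1) {c : ℝ}
    (hc : 0 < c) : Adm L M (polar n c F) where
  meas := by
    have := h.meas.comp (measurable_refl n c)
    refine Measurable.ite ?_ (h.meas.max this) (h.meas.min this)
    exact measurableSet_le (by fun_prop) measurable_const
  nonneg x := by
    unfold RotorRouterPaper.polar
    have := h.nonneg x
    have := h.nonneg (refl n c x)
    split_ifs <;> simp [*]
  le x := by
    unfold RotorRouterPaper.polar
    have := h.le x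
    have := h.le (refl n c x)
    split_ifs <;> simp [*]
  supp x hx := by
    unfold RotorRouterPaper.polar
    have h1 := h.supp x hx
    have h2 := h.nonneg (refl n c x)
    split_ifs with hh
    · have : L ≤ ‖refl n c x‖ := by
        refine hx.trans ?_
        rw [← sq_le_sq₀ (norm_nonneg _) (norm_nonneg _), norm_refl_sq hn]
        have : 0 ≤ c * (c - inner ℝ n x) := mul_nonneg hc.le (by linarith)
        linarith
      rw [h1, h.supp _ this]; simp
    · rw [h1]; simp [h2]

lemma polar_of_lt {d : ℕ} {n : Vd d} (hn : ‖n‖ = 1) {c : ℝ} {F : Vd d → ℝ} {x : Vd d} (h : inner ℝ n x < c) :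
    polar n c F x = max (F x) (F (refl n c x)) ∧ polar n c F (refl n c x) = min (F x) (F (refl n c x)) := by
  have h2 : ¬ inner ℝ n (refl n c x) ≤ c := by rw [inner_refl hn]; linarith
  unfold polar
  rw [if_pos h.le, if_neg h2, refl_refl hn, min_comm]
  exact ⟨rfl, rfl⟩

lemma polar_of_eq {d : ℕ} {n : Vd d} {c : ℝ} {F : Vd d → ℝ} {x : Vd d} (h : refl n c x = x) :
    polar n c F x = F x := by
  unfold polar; rw [h]; simp

lemma polar_integral {d : ℕ} {L M : ℝ} {F : Vd d → ℝ} (h : Adm L M F) {n : Vd d} (hn : ‖n‖ = 1) {c : ℝ}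
    (hc : 0 < c) : ∫ x, polar n c F x = ∫ x, F x := by
  have key : ∀ x, polar n c F x + polar n c F (refl n c x) = F x + F (refl n c x) := by
    refine refl_cases hn c (fun x y => polar n c F x + polar n c F y = F x + F y) ?_ ?_ ?_
    · intro x y hxy; linarith
    · intro x hx _
      rw [(polar_of_lt hn hx).1, (polar_of_lt hn hx).2, max_add_min]
    · intro x _ hx; rw [polar_of_eq hx]
  exact le_antisymm (int_le_of_pair hn c (h.polar hn hc).integrable h.integrable fun x => (key x).le)
    (int_le_of_pair hn c h.integrable (h.polar hn hc).integrable fun x => (key x).ge)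

/-! sets -/
def Uset {d : ℕ} (F : Vd d → ℝ) : Set (Vd d) := {x | 0 < F x}
def Dout {d : ℕ} (R : ℝ) (F : Vd d → ℝ) : Set (Vd d) := {x | 0 < F x ∧ R ≤ ‖x‖}
def Din {d : ℕ} (R : ℝ) (F : Vd d → ℝ) : Set (Vd d) := {x | ¬ 0 < F x ∧ ‖x‖ < R}

lemma meas_Uset {d : ℕ} {F : Vd d → ℝ} (h : Measurable F) : MeasurableSet (Uset F) :=
  measurableSet_lt measurable_const h
lemma meas_Dout {d : ℕ} (R : ℝ) {F : Vd d → ℝ} (h : Measurable F) : MeasurableSet (Dout R F) :=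
  (meas_Uset h).inter (measurableSet_le measurable_const measurable_norm)
lemma meas_Din {d : ℕ} (R : ℝ) {F : Vd d → ℝ} (h : Measurable F) : MeasurableSet (Din R F) :=
  (meas_Uset h).compl.inter (measurableSet_lt measurable_norm measurable_const)

lemma fin_bdd {d : ℕ} {s : Set (Vd d)} (K : ℝ) (h : ∀ x ∈ s, ‖x‖ ≤ K) : volume s < ⊤ :=
  lt_of_le_of_lt (measure_mono (fun x hx => by simpa using h x hx))
    (measure_closedBall_lt_top (x := (0 : Vd d)) (r := K))

lemma Adm.lt_of_pos {d : ℕ} {L M : ℝ} {F : Vd d → ℝ} (h : Adm L M F) {x : Vd d} (hx : 0 < F x) : ‖x‖ < L := by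
  by_contra hh; push Not at hh; linarith [h.supp x hh]

lemma ind_integrable {d : ℕ} {s : Set (Vd d)} (hs : MeasurableSet s) (K : ℝ) (h : ∀ x ∈ s, ‖x‖ ≤ K) :
    Integrable (s.indicator (fun _ => (1:ℝ))) :=
  (integrable_indicator_iff hs).mpr (integrableOn_const (fin_bdd K h).ne)

lemma ind_integral {d : ℕ} {s : Set (Vd d)} (hs : MeasurableSet s) :
    ∫ x, s.indicator (fun _ => (1:ℝ)) x = volume.real s := by
  rw [integral_indicator hs]; simp

lemma ind_if {α : Type*} (s : Set α) (p : Prop) [Decidable p] (x : α) (h : x ∈ s ↔ p) :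
    s.indicator (fun _ => (1:ℝ)) x = if p then 1 else 0 := by
  by_cases hp : p
  · rw [if_pos hp, Set.indicator_of_mem (h.mpr hp)]
  · rw [if_neg hp, Set.indicator_of_notMem (fun h' => hp (h.mp h'))]

lemma ind_U {d : ℕ} (F : Vd d → ℝ) (x : Vd d) :
    (Uset F).indicator (fun _ => (1:ℝ)) x = if 0 < F x then 1 else 0 := ind_if _ _ _ Iff.rfl

lemma ind_Dout {d : ℕ} (R : ℝ) (F : Vd d → ℝ) (x : Vd d) :
    (Dout R F).indicator (fun _ => (1:ℝ)) x = if 0 < F x ∧ R ≤ ‖x‖ then 1 else 0 := ind_if _ _ _ Iff.rfl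

lemma polar_Uset {d : ℕ} {L M : ℝ} {F : Vd d → ℝ} (h : Adm L M F) {n : Vd d} (hn : ‖n‖ = 1) {c : ℝ}
    (hc : 0 < c) : volume.real (Uset (polar n c F)) ≤ volume.real (Uset F) := by
  have h' := h.polar hn hc
  rw [← ind_integral (meas_Uset h.meas), ← ind_integral (meas_Uset h'.meas)]
  refine int_le_of_pair hn c (ind_integrable (meas_Uset h'.meas) L fun x hx => (h'.lt_of_pos hx).le)
    (ind_integrable (meas_Uset h.meas) L fun x hx => (h.lt_of_pos hx).le) ?_
  refine refl_cases hn c (fun x y => (Uset (polar n c F)).indicator (fun _ => (1:ℝ)) x +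
    (Uset (polar n c F)).indicator (fun _ => (1:ℝ)) y ≤ (Uset F).indicator (fun _ => (1:ℝ)) x +
    (Uset F).indicator (fun _ => (1:ℝ)) y) ?_ ?_ ?_
  · intro x y hxy; linarith
  · intro x hx _
    simp only [ind_U]
    rw [(polar_of_lt hn hx).1, (polar_of_lt hn hx).2]
    simp only [lt_max_iff, lt_min_iff]
    by_cases h1 : 0 < F x <;> by_cases h2 : 0 < F (refl n c x) <;> simp [h1, h2]
  · intro x _ hx
    simp only [ind_U, polar_of_eq hx]
    exact le_rfl

def Tset {d : ℕ} (R : ℝ) (F : Vd d → ℝ) (n : Vd d) (c : ℝ) : Set (Vd d) :=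
  {y | y ∈ Din R F ∧ refl n c y ∈ Dout R F}

lemma ind_Tset {d : ℕ} (R : ℝ) (F : Vd d → ℝ) (n : Vd d) (c : ℝ) (x : Vd d) :
    (Tset R F n c).indicator (fun _ => (1:ℝ)) x =
      if (¬0 < F x ∧ ‖x‖ < R) ∧ 0 < F (refl n c x) ∧ R ≤ ‖refl n c x‖ then 1 else 0 := ind_if _ _ _ Iff.rfl

lemma meas_Tset {d : ℕ} (R : ℝ) {F : Vd d → ℝ} (h : Measurable F) (n : Vd d) (c : ℝ) :
    MeasurableSet (Tset R F n c) :=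
  (meas_Din R h).inter (measurable_refl n c (meas_Dout R h))

lemma polar_Dout {d : ℕ} {L M R : ℝ} {F : Vd d → ℝ} (h : Adm L M F) {n : Vd d} (hn : ‖n‖ = 1) {c : ℝ}
    (hc : 0 < c) : volume.real (Dout R (polar n c F)) + volume.real (Tset R F n c) ≤ volume.real (Dout R F) := by
  have h' := h.polar hn hc
  have i1 := (ind_integrable (meas_Dout R h'.meas) L fun x hx => (h'.lt_of_pos hx.1).le)
  have i2 := (ind_integrable (meas_Tset R h.meas n c) R fun x hx => hx.1.2.le)
  have i3 := (ind_integrable (meas_Dout R h.meas) L fun x hx => (h.lt_of_pos hx.1).le)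
  rw [← ind_integral (meas_Dout R h.meas), ← ind_integral (meas_Dout R h'.meas),
    ← ind_integral (meas_Tset R h.meas n c), ← integral_add i1 i2]
  refine int_le_of_pair hn c (i1.add i2) i3 ?_
  have key : ∀ x, inner ℝ n x < c → R ≤ ‖x‖ → R ≤ ‖refl n c x‖ := by
    intro x hx hR
    refine hR.trans ?_
    rw [← sq_le_sq₀ (norm_nonneg _) (norm_nonneg _), norm_refl_sq hn]
    have : 0 ≤ c * (c - inner ℝ n x) := mul_nonneg hc.le (by linarith)
    linarith
  have red : ∀ x, refl n c (refl n c x) = x := refl_refl hn c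
  have main : ∀ x, inner ℝ n x < c → 
      ((if 0 < polar n c F x ∧ R ≤ ‖x‖ then (1:ℝ) else 0) +
        (if (¬0 < F x ∧ ‖x‖ < R) ∧ 0 < F (refl n c x) ∧ R ≤ ‖refl n c x‖ then (1:ℝ) else 0)) +
      ((if 0 < polar n c F (refl n c x) ∧ R ≤ ‖refl n c x‖ then (1:ℝ) else 0) +
        (if (¬0 < F (refl n c x) ∧ ‖refl n c x‖ < R) ∧ 0 < F x ∧ R ≤ ‖x‖ then (1:ℝ) else 0)) ≤
      (if 0 < F x ∧ R ≤ ‖x‖ then (1:ℝ) else 0) + (if 0 < F (refl n c x) ∧ R ≤ ‖refl n c x‖ then (1:ℝ) else 0) := by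
    intro x hx
    rw [(polar_of_lt hn hx).1, (polar_of_lt hn hx).2]
    simp only [lt_max_iff, lt_min_iff]
    have hk := key x hx
    have e3 : ‖x‖ < R ↔ ¬ R ≤ ‖x‖ := not_le.symm
    have e4 : ‖refl n c x‖ < R ↔ ¬ R ≤ ‖refl n c x‖ := not_le.symm
    by_cases h1 : 0 < F x <;> by_cases h2 : 0 < F (refl n c x) <;> 
     by_cases h3 : R ≤ ‖x‖ <;> by_cases h4 : R ≤ ‖refl n c x‖ <;> 
      first
      | exact absurd (hk h3) h4
      | simp [h1, h2, h3, h4, e3, e4]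
  intro x
  simp only [Pi.add_apply, ind_Dout, ind_Tset, red]
  rcases lt_trichotomy (inner ℝ n x) c with hx | hx | hx
  · have := main x hx
    exact this
  · have : refl n c x = x := by unfold refl; rw [hx]; simp
    simp only [this, polar_of_eq this]
    by_cases h1 : 0 < F x <;> by_cases h3 : R ≤ ‖x‖ <;> simp [h1, h3]
  · have := main (refl n c x) (by rw [inner_refl hn]; linarith)
    simp only [red] at this
    linarith



/-! ### Part 3: energy -/

def Kf {d : ℕ} (ρ : ℝ) (x y : Vd d) : ℝ := if ‖x - y‖ < ρ then 1 else 0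

def gB {d : ℕ} (ρ : ℝ) (F G : Vd d → ℝ) (z : Vd d × Vd d) : ℝ :=
  Kf ρ z.1 z.2 * ((F z.1 - F z.2) * (G z.1 - G z.2))

def EnB {d : ℕ} (ρ : ℝ) (F G : Vd d → ℝ) : ℝ := ∫ z : Vd d × Vd d, gB ρ F G z

structure Bd {d : ℕ} (L M : ℝ) (F : Vd d → ℝ) : Prop where
  meas : Measurable F
  le : ∀ x, |F x| ≤ M
  supp : ∀ x, L ≤ ‖x‖ → F x = 0

lemma Adm.bd {d : ℕ} {L M : ℝ} {F : Vd d → ℝ} (h : Adm L M F) : Bd L M F :=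
  ⟨h.meas, fun x => by rw [abs_of_nonneg (h.nonneg x)]; exact h.le x, h.supp⟩

lemma Bd.integrable {d : ℕ} {L M : ℝ} {F : Vd d → ℝ} (h : Bd L M F) : Integrable F :=
  integrable_bdd volume h.meas M L h.le h.supp

lemma Kf_nonneg {d : ℕ} (ρ : ℝ) (x y : Vd d) : 0 ≤ Kf ρ x y := by unfold Kf; split_ifs <;> norm_num
lemma Kf_le_one {d : ℕ} (ρ : ℝ) (x y : Vd d) : Kf ρ x y ≤ 1 := by unfold Kf; split_ifs <;> norm_num
lemma Kf_comm {d : ℕ} (ρ : ℝ) (x y : Vd d) : Kf ρ x y = Kf ρ y x := by unfold Kf; rw [norm_sub_rev]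

lemma measurable_Kf {d : ℕ} (ρ : ℝ) : Measurable (fun z : Vd d × Vd d => Kf ρ z.1 z.2) := by
  unfold Kf
  refine Measurable.ite ?_ measurable_const measurable_const
  exact measurableSet_lt (by fun_prop) measurable_const

lemma measurable_gB {d : ℕ} (ρ : ℝ) {F G : Vd d → ℝ} (hF : Measurable F) (hG : Measurable G) :
    Measurable (gB ρ F G) := by
  unfold gB
  exact (measurable_Kf ρ).mul (((hF.comp measurable_fst).sub (hF.comp measurable_snd)).mul
    ((hG.comp measurable_fst).sub (hG.comp measurable_snd)))

lemma gB_integrable {d : ℕ} {ρ : ℝ} (hρ : 0 < ρ) {L M L' M' : ℝ} {F G : Vd d → ℝ} (hF : Bd L M F) (hG : Bd L' M' G) :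
    Integrable (gB ρ F G) := by
  have hM : 0 ≤ M := (abs_nonneg _).trans (hF.le 0)
  have hM' : 0 ≤ M' := (abs_nonneg _).trans (hG.le 0)
  refine integrable_bdd _ (measurable_gB ρ hF.meas hG.meas) (1 * ((2 * M) * (2 * M'))) (L + ρ) ?_ ?_
  · intro z
    unfold gB
    rw [abs_mul, abs_mul, abs_of_nonneg (Kf_nonneg _ _ _)]
    have h1 : |F z.1 - F z.2| ≤ 2 * M := by linarith [abs_sub (F z.1) (F z.2), hF.le z.1, hF.le z.2]
    have h2 : |G z.1 - G z.2| ≤ 2 * M' := by linarith [abs_sub (G z.1) (G z.2), hG.le z.1, hG.le z.2]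
    gcongr
    exact Kf_le_one _ _ _
  · rintro ⟨x, y⟩ hz
    unfold gB Kf
    simp only
    split_ifs with h
    · have : L ≤ ‖x‖ ∧ L ≤ ‖y‖ := by
        rw [Prod.norm_mk, le_max_iff] at hz
        have h1 : ‖x‖ ≤ ‖y‖ + ‖x - y‖ := norm_le_norm_add_norm_sub' x y
        have h2 : ‖y‖ ≤ ‖x‖ + ‖x - y‖ := by rw [norm_sub_rev]; exact norm_le_norm_add_norm_sub' y x
        rcases hz with hz | hz <;> constructor <;> linarith
      rw [hF.supp x this.1, hF.supp y this.2]; ring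
    · ring

lemma polar_of_le {d : ℕ} {n : Vd d} (hn : ‖n‖ = 1) {c : ℝ} {F : Vd d → ℝ} {x : Vd d} (h : inner ℝ n x ≤ c) :
    polar n c F x = max (F x) (F (refl n c x)) ∧ polar n c F (refl n c x) = min (F x) (F (refl n c x)) := by
  rcases h.lt_or_eq with h | h
  · exact polar_of_lt hn h
  · have : refl n c x = x := by unfold refl; rw [h]; simp
    rw [this, polar_of_eq this]; simp

lemma two_point (k k' a a' b b' : ℝ) (h : k' ≤ k) :
    k * ((max a a' - max b b') * (max a a' - max b b')) + k' * ((min a a' - max b b') * (min a a' - max b b'))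
     + k' * ((max a a' - min b b') * (max a a' - min b b')) + k * ((min a a' - min b b') * (min a a' - min b b'))
    ≤ k * ((a - b) * (a - b)) + k' * ((a' - b) * (a' - b)) + k' * ((a - b') * (a - b')) + k * ((a' - b') * (a' - b')) := by
  have h0 : 0 ≤ k - k' := by linarith
  rcases le_total a a' with ha | ha <;> rcases le_total b b' with hb | hb
  · simp only [max_eq_right ha, min_eq_left ha, max_eq_right hb, min_eq_left hb]; nlinarith
  · simp only [max_eq_right ha, min_eq_left ha, max_eq_left hb, min_eq_right hb]
    nlinarith [mul_nonneg h0 (mul_nonneg (sub_nonneg.mpr ha) (sub_nonneg.mpr hb))]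
  · simp only [max_eq_left ha, min_eq_right ha, max_eq_right hb, min_eq_left hb]
    nlinarith [mul_nonneg h0 (mul_nonneg (sub_nonneg.mpr ha) (sub_nonneg.mpr hb))]
  · simp only [max_eq_left ha, min_eq_right ha, max_eq_left hb, min_eq_right hb]; nlinarith

lemma polar_energy {d : ℕ} {ρ L M : ℝ} (hρ : 0 < ρ) {F : Vd d → ℝ} (h : Adm L M F) {n : Vd d} (hn : ‖n‖ = 1) {c : ℝ}
    (hc : 0 < c) : EnB ρ (polar n c F) (polar n c F) ≤ EnB ρ F F := by
  set σ := refl n c with hσ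
  have σσ : ∀ x, σ (σ x) = x := refl_refl hn c
  have mp : MeasurePreserving σ volume volume := refl_mp hn c
  let e : Vd d ≃ᵐ Vd d := ⟨⟨σ, σ, σσ, σσ⟩, mp.measurable, mp.measurable⟩
  have mid : MeasurePreserving (id : Vd d → Vd d) volume volume := MeasurePreserving.id _
  have m1 : MeasurePreserving (e.prodCongr (MeasurableEquiv.refl (Vd d))) volume volume := mp.prod mid
  have m2 : MeasurePreserving ((MeasurableEquiv.refl (Vd d)).prodCongr e) volume volume := mid.prod mp
  have m3 : MeasurePreserving (e.prodCongr e) volume volume := mp.prod mp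
  have key : ∀ g : Vd d × Vd d → ℝ, Integrable g →
      Integrable (fun z : Vd d × Vd d => g (z.1, z.2) + g (σ z.1, z.2) + g (z.1, σ z.2) + g (σ z.1, σ z.2)) ∧
      ∫ z : Vd d × Vd d, (g (z.1, z.2) + g (σ z.1, z.2) + g (z.1, σ z.2) + g (σ z.1, σ z.2)) = 4 * ∫ z, g z := by
    intro g hg
    have i0 : Integrable (fun z : Vd d × Vd d => g (z.1, z.2)) := hg
    have i1 : Integrable (fun z : Vd d × Vd d => g (σ z.1, z.2)) := m1.integrable_comp_of_integrable hg
    have i2 : Integrable (fun z : Vd d × Vd d => g (z.1, σ z.2)) := m2.integrable_comp_of_integrable hg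
    have i3 : Integrable (fun z : Vd d × Vd d => g (σ z.1, σ z.2)) := m3.integrable_comp_of_integrable hg
    have e1 : ∫ z : Vd d × Vd d, g (σ z.1, z.2) = ∫ z, g z := m1.integral_comp' g
    have e2 : ∫ z : Vd d × Vd d, g (z.1, σ z.2) = ∫ z, g z := m2.integral_comp' g
    have e3 : ∫ z : Vd d × Vd d, g (σ z.1, σ z.2) = ∫ z, g z := m3.integral_comp' g
    have j1 : Integrable (fun z : Vd d × Vd d => g (z.1, z.2) + g (σ z.1, z.2)) := i0.add i1
    have j2 : Integrable (fun z : Vd d × Vd d => g (z.1, z.2) + g (σ z.1, z.2) + g (z.1, σ z.2)) := j1.add i2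
    refine ⟨j2.add i3, ?_⟩
    rw [integral_add j2 i3, integral_add j1 i2, integral_add i0 i1, e1, e2, e3]
    ring
  have h' := h.polar hn hc
  have k1 := key _ (gB_integrable hρ h.bd h.bd)
  have k2 := key _ (gB_integrable hρ h'.bd h'.bd)
  have main : ∀ x y, inner ℝ n x ≤ c → inner ℝ n y ≤ c → ∀ g g', g = gB ρ F F → g' = gB ρ (polar n c F) (polar n c F) →
      g' (x, y) + g' (σ x, y) + g' (x, σ y) + g' (σ x, σ y) ≤ g (x, y) + g (σ x, y) + g (x, σ y) + g (σ x, σ y) := by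
    intro x y hx hy g g' hg hg'
    have a1 : Kf ρ (σ x) (σ y) = Kf ρ x y := by unfold Kf; rw [norm_refl_sub_refl hn]
    have a2 : Kf ρ x (σ y) = Kf ρ (σ x) y := by unfold Kf; rw [norm_refl_sub_comm hn]
    have a3 : Kf ρ (σ x) y ≤ Kf ρ x y := by
      have : ‖x - y‖ ≤ ‖σ x - y‖ := by
        rw [← sq_le_sq₀ (norm_nonneg _) (norm_nonneg _), norm_refl_sub hn]
        have : 0 ≤ (c - inner ℝ n x) * (c - inner ℝ n y) := mul_nonneg (by linarith) (by linarith)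
        linarith
      unfold Kf
      split_ifs <;> linarith
    subst hg hg'
    unfold gB
    have q : ∀ x, inner ℝ n x ≤ c → polar n c F x = max (F x) (F (σ x)) ∧ polar n c F (σ x) = min (F x) (F (σ x)) :=
      fun x hx => polar_of_le hn hx
    simp only [a1, a2, (q x hx).1, (q x hx).2, (q y hy).1, (q y hy).2]
    exact two_point _ _ _ _ _ _ a3
  have := integral_mono k2.1 k1.1 (by
    rintro ⟨x, y⟩
    have hh : ∀ x, inner ℝ n x ≤ c ∨ inner ℝ n (σ x) ≤ c := by
      intro x; rw [hσ, inner_refl hn]; by_contra hcon; push Not at hcon; linarith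
    rcases hh x with hx | hx <;> rcases hh y with hy | hy
    · exact main x y hx hy _ _ rfl rfl
    · have := main _ _ hx hy _ _ rfl rfl
      simp only [σσ] at this ⊢; linarith
    · have := main _ _ hx hy _ _ rfl rfl
      simp only [σσ] at this ⊢; linarith
    · have := main _ _ hx hy _ _ rfl rfl
      simp only [σσ] at this ⊢; linarith)
  rw [k1.2, k2.2] at this
  unfold EnB
  linarith



/-! ### Part 4: averaging over polarizations -/

open Measure in
lemma lintegral_polarCoord {d : ℕ} (hd : 1 ≤ d) {g : Vd d → ENNReal} (hg : Measurable g) :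
    ∫⁻ x, g x = ∫⁻ n : Metric.sphere (0 : Vd d) 1, ∫⁻ r in Set.Ioi (0:ℝ), ENNReal.ofReal (r ^ (d - 1)) * g (r • (n : Vd d))
      ∂volume ∂(volume : Measure (Vd d)).toSphere := by
  have : Nonempty (Fin d) := ⟨⟨0, hd⟩⟩
  have hfr : Module.finrank ℝ (Vd d) = d := by simp
  have hm : Measurable (fun p : Metric.sphere (0 : Vd d) 1 × Set.Ioi (0:ℝ) => g (p.2.1 • p.1.1)) := by
    apply hg.comp; fun_prop
  calc ∫⁻ x, g x = ∫⁻ x in ({0}ᶜ : Set (Vd d)), g x := by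
        rw [← lintegral_add_compl g (measurableSet_singleton (0 : Vd d))]
        simp
    _ = ∫⁻ x : ({0}ᶜ : Set (Vd d)), g x ∂((volume : Measure (Vd d)).comap (↑)) :=
        (lintegral_subtype_comap (measurableSet_singleton _).compl g).symm
    _ = ∫⁻ p, g (p.2.1 • p.1.1) ∂((volume : Measure (Vd d)).toSphere.prod (volumeIoiPow (Module.finrank ℝ (Vd d) - 1))) := by
        rw [← (measurePreserving_homeomorphUnitSphereProd (volume : Measure (Vd d))).lintegral_comp hm]
        refine lintegral_congr fun x => ?_
        have := congrArg Subtype.val ((homeomorphUnitSphereProd (Vd d)).symm_apply_apply x)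
        rw [homeomorphUnitSphereProd_symm_apply_coe] at this
        rw [this]
    _ = _ := by
        rw [lintegral_prod _ hm.aemeasurable]
        refine lintegral_congr fun n => ?_
        have hmn : Measurable (fun r : Set.Ioi (0:ℝ) => g (r.1 • n.1)) := by
          apply hg.comp; fun_prop
        simp only
        rw [volumeIoiPow, lintegral_withDensity_eq_lintegral_mul _ (by fun_prop) hmn, hfr]
        simp only [Pi.mul_apply]
        exact lintegral_subtype_comap measurableSet_Ioi (fun r => ENNReal.ofReal (r ^ (d - 1)) * g (r • (n : Vd d)))

def ind {d : ℕ} (s : Set (Vd d)) (x : Vd d) : ENNReal := s.indicator (fun _ => 1) x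

lemma measurable_ind {d : ℕ} {s : Set (Vd d)} (hs : MeasurableSet s) : Measurable (ind s) :=
  measurable_const.indicator hs

lemma lintegral_ind {d : ℕ} {s : Set (Vd d)} (hs : MeasurableSet s) : ∫⁻ x, ind s x = volume s := by
  unfold ind; exact lintegral_indicator_one hs

def parMeas (d : ℕ) (L : ℝ) : Measure (Metric.sphere (0 : Vd d) 1 × ℝ) :=
  ((volume : Measure (Vd d)).toSphere).prod (volume.restrict (Set.Ioo 0 (2 * L)))

instance {d : ℕ} {L : ℝ} : IsFiniteMeasure (parMeas d L) := by
  unfold parMeas; infer_instance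

lemma measurable_refl2 {d : ℕ} : Measurable (fun q : Vd d × (Metric.sphere (0 : Vd d) 1 × ℝ) =>
    refl (q.2.1 : Vd d) (q.2.2 / 2) q.1) := by
  unfold refl
  apply Continuous.measurable
  fun_prop

lemma avg_point {d : ℕ} (hd : 1 ≤ d) {L R M : ℝ} (hRL : R ≤ L) {F : Vd d → ℝ} (h : Adm L M F)
    {y : Vd d} (hy : y ∈ Din R F) :
    volume (Dout R F) ≤ ENNReal.ofReal ((2 * L) ^ (d - 1)) *
      ∫⁻ p, ind (Dout R F) (refl (p.1 : Vd d) (p.2 / 2) y) ∂(parMeas d L) := by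
  have hmD := meas_Dout R h.meas
  have hmi := measurable_ind hmD
  have hm1 : Measurable (fun x => ind (Dout R F) (y + x)) := hmi.comp (measurable_const_add y)
  have hm2 : Measurable (fun p : Metric.sphere (0 : Vd d) 1 × ℝ => ind (Dout R F) (refl (p.1 : Vd d) (p.2 / 2) y)) :=
    hmi.comp (measurable_refl2.comp (measurable_const.prodMk measurable_id))
  rw [← lintegral_ind hmD, ← lintegral_add_left_eq_self _ y, lintegral_polarCoord hd hm1]
  unfold parMeas
  rw [lintegral_prod _ hm2.aemeasurable,
    ← lintegral_const_mul' _ _ ENNReal.ofReal_ne_top]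
  refine lintegral_mono fun n => ?_
  have hn : ‖(n : Vd d)‖ = 1 := by simp
  set b : ℝ := inner ℝ (n : Vd d) y
  rw [← lintegral_indicator measurableSet_Ioi, ← lintegral_indicator measurableSet_Ioo,
    ← lintegral_const_mul' _ _ ENNReal.ofReal_ne_top]
  conv_rhs => rw [← lintegral_add_right_eq_self (μ := (volume : Measure ℝ)) _ (2 * b)]
  refine lintegral_mono fun r => ?_
  by_cases hr : 0 < r
  · rw [Set.indicator_of_mem (show r ∈ Set.Ioi (0:ℝ) from hr)]
    by_cases hD : y + r • (n : Vd d) ∈ Dout R F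
    · have hx : ‖y + r • (n : Vd d)‖ < L := h.lt_of_pos hD.1
      have hyL : ‖y‖ < L := hy.2.trans_le hRL
      have hr2 : r ≤ 2 * L := by
        have : ‖r • (n : Vd d)‖ = r := by rw [norm_smul, hn, Real.norm_of_nonneg hr.le, mul_one]
        have h2 : ‖r • (n : Vd d)‖ ≤ ‖y + r • (n : Vd d)‖ + ‖y‖ := by
          have := norm_sub_le (y + r • (n : Vd d)) y
          simpa using this
        linarith
      have hin : inner ℝ (n : Vd d) (y + r • (n : Vd d)) = b + r := by
        rw [inner_add_right, inner_smul_right, real_inner_self_eq_norm_sq, hn]; ring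
      have hmem : r + 2 * b ∈ Set.Ioo 0 (2 * L) := by
        constructor
        · have h1 : ‖y + r • (n : Vd d)‖ ^ 2 = ‖y‖ ^ 2 + r * (r + 2 * b) := by
            rw [norm_add_sq_real, inner_smul_right, real_inner_comm, norm_smul, hn, Real.norm_of_nonneg hr.le]
            ring
          have h2 : ‖y‖ < ‖y + r • (n : Vd d)‖ := hy.2.trans_le hD.2
          have h3 : ‖y‖ ^ 2 < ‖y + r • (n : Vd d)‖ ^ 2 := pow_lt_pow_left₀ h2 (norm_nonneg _) (by norm_num)
          by_contra hneg
          push Not at hneg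
          have := mul_nonpos_of_nonneg_of_nonpos hr.le hneg
          linarith
        · have h1 := real_inner_le_norm (n : Vd d) y
          have h2 := real_inner_le_norm (n : Vd d) (y + r • (n : Vd d))
          rw [hin, hn] at h2
          rw [hn] at h1
          linarith
      rw [Set.indicator_of_mem hmem]
      have : refl (n : Vd d) ((r + 2 * b) / 2) y = y + r • (n : Vd d) := by
        unfold refl
        congr 2
        simp only [b]; ring
      simp only [this]
      gcongr
    · simp only
      have : ind (Dout R F) (y + r • (n : Vd d)) = 0 := by
        unfold ind; rw [Set.indicator_of_notMem hD]
      rw [this, mul_zero]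
      exact zero_le
  · rw [Set.indicator_of_notMem (show r ∉ Set.Ioi (0:ℝ) from hr)]
    exact zero_le

lemma avg_total {d : ℕ} (hd : 1 ≤ d) {L R M : ℝ} (hRL : R ≤ L) {F : Vd d → ℝ} (h : Adm L M F) :
    volume (Dout R F) * volume (Din R F) ≤ ENNReal.ofReal ((2 * L) ^ (d - 1)) *
      ∫⁻ p in {p | 0 < p.2}, volume (Tset R F (p.1 : Vd d) (p.2 / 2)) ∂(parMeas d L) := by
  have hmD := meas_Dout R h.meas
  have hmi := measurable_ind hmD
  have hDi := meas_Din R h.meas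
  have hmeas : Measurable (fun q : Vd d × (Metric.sphere (0 : Vd d) 1 × ℝ) =>
    ind (Dout R F) (refl (q.2.1 : Vd d) (q.2.2 / 2) q.1)) := hmi.comp measurable_refl2
  have hpos : (parMeas d L).restrict {p | 0 < p.2} = parMeas d L := by
    refine Measure.restrict_eq_self_of_ae_mem ?_
    unfold parMeas
    have h1 : ∀ᵐ s ∂(volume.restrict (Set.Ioo 0 (2 * L))), 0 < s := by
      filter_upwards [ae_restrict_mem measurableSet_Ioo] with s hs using hs.1
    exact Measure.quasiMeasurePreserving_snd.ae h1
  rw [hpos]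
  calc volume (Dout R F) * volume (Din R F) = ∫⁻ y in Din R F, volume (Dout R F) := by
        rw [setLIntegral_const]
    _ ≤ ∫⁻ y in Din R F, ENNReal.ofReal ((2 * L) ^ (d - 1)) *
      ∫⁻ p, ind (Dout R F) (refl (p.1 : Vd d) (p.2 / 2) y) ∂(parMeas d L) := by
        refine setLIntegral_mono' hDi fun y hy => avg_point hd hRL h hy
    _ = ENNReal.ofReal ((2 * L) ^ (d - 1)) * ∫⁻ y in Din R F,
      ∫⁻ p, ind (Dout R F) (refl (p.1 : Vd d) (p.2 / 2) y) ∂(parMeas d L) :=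
        lintegral_const_mul' _ _ ENNReal.ofReal_ne_top
    _ = ENNReal.ofReal ((2 * L) ^ (d - 1)) * ∫⁻ p, ∫⁻ y in Din R F,
       ind (Dout R F) (refl (p.1 : Vd d) (p.2 / 2) y) ∂volume ∂(parMeas d L) := by
        rw [lintegral_lintegral_swap hmeas.aemeasurable]
    _ = _ := by
        congr 1
        refine lintegral_congr fun p => ?_
        rw [← lintegral_ind (meas_Tset R h.meas _ _), ← lintegral_indicator hDi]
        refine lintegral_congr fun y => ?_
        by_cases hy : y ∈ Din R F
        · rw [Set.indicator_of_mem hy]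
          unfold ind
          by_cases hy2 : refl (p.1 : Vd d) (p.2 / 2) y ∈ Dout R F
          · rw [Set.indicator_of_mem hy2, Set.indicator_of_mem (show y ∈ Tset R F _ _ from ⟨hy, hy2⟩)]
          · rw [Set.indicator_of_notMem hy2, Set.indicator_of_notMem (fun h' => hy2 h'.2)]
        · rw [Set.indicator_of_notMem hy]
          unfold ind
          rw [Set.indicator_of_notMem (fun h' => hy h'.1)]

lemma exists_good_polar {d : ℕ} (hd : 1 ≤ d) (L : ℝ) :
    ∃ κ : ℝ, 0 < κ ∧ ∀ (R M : ℝ) (F : Vd d → ℝ), R ≤ L → Adm L M F → 0 < volume.real (Dout R F) →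
      0 < volume.real (Din R F) → ∃ (n : Vd d) (c : ℝ), ‖n‖ = 1 ∧ 0 < c ∧
        κ * (volume.real (Dout R F) * volume.real (Din R F)) ≤ volume.real (Tset R F n c) := by
  set K : ENNReal := ENNReal.ofReal ((2 * L) ^ (d - 1)) * parMeas d L Set.univ with hK
  have hKtop : K ≠ ⊤ := ENNReal.mul_ne_top ENNReal.ofReal_ne_top (measure_ne_top _ _)
  refine ⟨1 / (K.toReal + 1), by positivity, ?_⟩
  intro R M F hRL h h1 h2
  by_contra hcon
  push Not at hcon
  have htot := avg_total hd hRL h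
  set t := 1 / (K.toReal + 1) * (volume.real (Dout R F) * volume.real (Din R F)) with ht
  have hT : ∀ p : Metric.sphere (0 : Vd d) 1 × ℝ, 0 < p.2 → volume (Tset R F (p.1 : Vd d) (p.2 / 2)) ≤ ENNReal.ofReal t := by
    intro p hp
    have := hcon p.1 (p.2 / 2) (by simp) (by positivity)
    have hfin : volume (Tset R F (p.1 : Vd d) (p.2 / 2)) ≠ ⊤ := (fin_bdd R fun x hx => hx.1.2.le).ne
    rw [← ENNReal.ofReal_toReal hfin]
    exact ENNReal.ofReal_le_ofReal this.le
  have hle : volume (Dout R F) * volume (Din R F) ≤ K * ENNReal.ofReal t := by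
    refine htot.trans ?_
    rw [hK, mul_assoc]
    gcongr
    calc ∫⁻ p in {p | 0 < p.2}, volume (Tset R F (p.1 : Vd d) (p.2 / 2)) ∂(parMeas d L)
        ≤ ∫⁻ p in {p | 0 < p.2}, ENNReal.ofReal t ∂(parMeas d L) :=
          setLIntegral_mono' (measurableSet_lt measurable_const measurable_snd) fun p hp => hT p hp
      _ ≤ _ := by
          rw [setLIntegral_const, mul_comm]
          gcongr
          exact Set.subset_univ _
  have ht0 : 0 < t := by positivity
  have := ENNReal.toReal_mono (ENNReal.mul_ne_top hKtop ENNReal.ofReal_ne_top) hle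
  rw [ENNReal.toReal_mul, ENNReal.toReal_mul, ENNReal.toReal_ofReal ht0.le] at this
  change volume.real (Dout R F) * volume.real (Din R F) ≤ _ at this
  have h3 : (K.toReal + 1) * t = volume.real (Dout R F) * volume.real (Din R F) := by
    rw [ht]; have : K.toReal + 1 ≠ 0 := by positivity
    field_simp
  linarith



/-! ### Part 5: symmetrization in the limit and the lower bound -/

lemma Dout_le_Din {d : ℕ} {L M R : ℝ} {F : Vd d → ℝ} (h : Adm L M F)
    (hU : volume.real (Uset F) ≤ volume.real (Metric.ball (0 : Vd d) R)) :
    volume.real (Dout R F) ≤ volume.real (Din R F) := by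
  have hmU := meas_Uset h.meas
  have hmB : MeasurableSet (Metric.ball (0 : Vd d) R) := Metric.isOpen_ball.measurableSet
  have fU : volume (Uset F) ≠ ⊤ := (fin_bdd L fun x hx => (h.lt_of_pos hx).le).ne
  have fB : volume (Metric.ball (0 : Vd d) R) ≠ ⊤ := measure_ball_lt_top.ne
  have e1 : Dout R F = Uset F \ Metric.ball 0 R := by
    ext x; simp [Dout, Uset]
  have e2 : Din R F = Metric.ball 0 R \ Uset F := by
    ext x; simp [Din, Uset, and_comm]
  have h1 := measureReal_sdiff_add_inter (μ := volume) hmB fU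
  have h2 := measureReal_sdiff_add_inter (μ := volume) hmU fB
  rw [Set.inter_comm] at h2
  rw [e1, e2]; linarith

lemma polar_inf {d : ℕ} (hd : 1 ≤ d) {ρ L M R : ℝ} (hρ : 0 < ρ) (hRL : R ≤ L) {F : Vd d → ℝ} (h : Adm L M F)
    (hU : volume.real (Uset F) ≤ volume.real (Metric.ball (0 : Vd d) R)) (ε : ℝ) (hε : 0 < ε) :
    ∃ G : Vd d → ℝ, Adm L M G ∧ ∫ x, G x = ∫ x, F x ∧ EnB ρ G G ≤ EnB ρ F F ∧ volume.real (Dout R G) < ε := by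
  obtain ⟨κ, hκ, hgood⟩ := exists_good_polar hd L
  let 𝒢 : Set (Vd d → ℝ) := {G | Adm L M G ∧ volume.real (Uset G) ≤ volume.real (Metric.ball (0 : Vd d) R) ∧
    ∫ x, G x = ∫ x, F x ∧ EnB ρ G G ≤ EnB ρ F F}
  let S : Set ℝ := (fun G => volume.real (Dout R G)) '' 𝒢
  have hne : S.Nonempty := ⟨_, F, ⟨h, hU, rfl, le_rfl⟩, rfl⟩
  have hbdd : BddBelow S := ⟨0, by rintro _ ⟨G, _, rfl⟩; exact measureReal_nonneg⟩
  have hstep : ∀ G ∈ 𝒢, 0 < volume.real (Dout R G) → ∃ G' ∈ 𝒢,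
      volume.real (Dout R G') ≤ volume.real (Dout R G) - κ * volume.real (Dout R G) ^ 2 := by
    rintro G ⟨h1, h2, h3, h4⟩ hpos
    have h5 := Dout_le_Din h1 h2
    obtain ⟨n, c, hn, hc, hT⟩ := hgood R M G hRL h1 hpos (hpos.trans_le h5)
    refine ⟨polar n c G, ⟨h1.polar hn hc, (polar_Uset h1 hn hc).trans h2,
      (polar_integral h1 hn hc).trans h3, (polar_energy hρ h1 hn hc).trans h4⟩, ?_⟩
    have h6 := polar_Dout (R := R) h1 hn hc
    have h7 : κ * volume.real (Dout R G) ^ 2 ≤ κ * (volume.real (Dout R G) * volume.real (Din R G)) := by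
      rw [sq]; gcongr
    linarith
  have hI0 : 0 ≤ sInf S := le_csInf hne (by rintro _ ⟨G, _, rfl⟩; exact measureReal_nonneg)
  have hI : sInf S = 0 := by
    by_contra hne0
    have hpos : 0 < sInf S := lt_of_le_of_ne hI0 (Ne.symm hne0)
    obtain ⟨_, ⟨G, hG, rfl⟩, hlt⟩ := exists_lt_of_csInf_lt hne
      (show sInf S < sInf S + κ * sInf S ^ 2 by have : 0 < κ * sInf S ^ 2 := by positivity
                                                linarith)
    have hge : sInf S ≤ volume.real (Dout R G) := csInf_le hbdd ⟨G, hG, rfl⟩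
    obtain ⟨G', hG', hle⟩ := hstep G hG (hpos.trans_le hge)
    have hge' : sInf S ≤ volume.real (Dout R G') := csInf_le hbdd ⟨G', hG', rfl⟩
    have : κ * sInf S ^ 2 ≤ κ * volume.real (Dout R G) ^ 2 := by gcongr
    simp only at hlt
    linarith
  obtain ⟨_, ⟨G, hG, rfl⟩, hlt⟩ := exists_lt_of_csInf_lt hne (show sInf S < ε by rw [hI]; exact hε)
  exact ⟨G, hG.1, hG.2.2.1, hG.2.2.2, hlt⟩

/-! The torsion function -/

def Wf {d : ℕ} (S : ℝ) (x : Vd d) : ℝ := max (S ^ 2 - ‖x‖ ^ 2) 0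

lemma Wf_adm {d : ℕ} {S : ℝ} (hS : 0 ≤ S) : Adm (d := d) S (S ^ 2) (Wf S) where
  meas := by unfold Wf; fun_prop
  nonneg x := le_max_right _ _
  le x := by unfold Wf; exact max_le (by linarith [sq_nonneg ‖x‖]) (sq_nonneg _)
  supp x hx := by
    unfold Wf
    apply max_eq_right
    have := pow_le_pow_left₀ hS hx 2
    linarith

def Jc (d : ℕ) (ρ : ℝ) : ℝ := ∫ h : Vd d, (if ‖h‖ < ρ then 1 else 0) * ‖h‖ ^ 2

lemma meas_cut {d : ℕ} (ρ : ℝ) : Measurable (fun h : Vd d => if ‖h‖ < ρ then (1:ℝ) else 0) :=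
  Measurable.ite (measurableSet_lt measurable_norm measurable_const) measurable_const measurable_const

lemma cut_integrable {d : ℕ} (ρ : ℝ) {g : Vd d → ℝ} (hg : Measurable g) (C : ℝ) (hC0 : 0 ≤ C)
    (hC : ∀ h, ‖h‖ < ρ → |g h| ≤ C) :
    Integrable (fun h : Vd d => (if ‖h‖ < ρ then (1:ℝ) else 0) * g h) := by
  refine integrable_bdd volume ((meas_cut ρ).mul hg) C ρ ?_ ?_
  · intro x
    split_ifs with h
    · simpa using hC x h
    · simpa using hC0
  · intro x hx
    rw [if_neg (not_lt.mpr hx), zero_mul]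

lemma Lquad {d : ℕ} {ρ : ℝ} (hρ : 0 < ρ) (x : Vd d) :
    Integrable (fun y : Vd d => Kf ρ x y * (‖y‖ ^ 2 - ‖x‖ ^ 2)) ∧
    ∫ y : Vd d, Kf ρ x y * (‖y‖ ^ 2 - ‖x‖ ^ 2) = Jc d ρ := by
  have i1 : Integrable (fun h : Vd d => (if ‖h‖ < ρ then (1:ℝ) else 0) * inner ℝ x h) :=
    cut_integrable ρ (by fun_prop) (‖x‖ * ρ) (by positivity) fun h hh =>
      (abs_real_inner_le_norm x h).trans (by gcongr)
  have i2 : Integrable (fun h : Vd d => (if ‖h‖ < ρ then (1:ℝ) else 0) * ‖h‖ ^ 2) :=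
    cut_integrable ρ (by fun_prop) (ρ ^ 2) (by positivity) fun h hh => by
      rw [abs_of_nonneg (by positivity)]; gcongr
  have e1 : ∀ h : Vd d, Kf ρ x (x + h) * (‖x + h‖ ^ 2 - ‖x‖ ^ 2)
      = 2 * ((if ‖h‖ < ρ then (1:ℝ) else 0) * inner ℝ x h) + (if ‖h‖ < ρ then (1:ℝ) else 0) * ‖h‖ ^ 2 := by
    intro h
    unfold Kf
    rw [norm_add_sq_real, sub_add_cancel_left, norm_neg]; ring
  have odd : ∫ h : Vd d, (if ‖h‖ < ρ then (1:ℝ) else 0) * inner ℝ x h = 0 := by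
    have := integral_neg_eq_self (fun h : Vd d => (if ‖h‖ < ρ then (1:ℝ) else 0) * inner ℝ x h) volume
    simp only [norm_neg, inner_neg_right, mul_neg, integral_neg] at this
    linarith
  have i3 : Integrable (fun h : Vd d => 2 * ((if ‖h‖ < ρ then (1:ℝ) else 0) * inner ℝ x h)
      + (if ‖h‖ < ρ then (1:ℝ) else 0) * ‖h‖ ^ 2) := (i1.const_mul 2).add i2
  constructor
  · have : Integrable (fun h : Vd d => Kf ρ x (x + h) * (‖x + h‖ ^ 2 - ‖x‖ ^ 2)) := by
      simp only [e1]; exact i3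
    have mp := measurePreserving_add_left (volume : Measure (Vd d)) x
    exact (mp.integrable_comp_emb (MeasurableEquiv.addLeft x).measurableEmbedding).mp this
  · rw [← integral_add_left_eq_self (μ := volume) _ x]
    simp only [e1]
    rw [integral_add (i1.const_mul 2) i2, integral_const_mul, odd]
    simp [Jc]

def LW {d : ℕ} (ρ S : ℝ) (x : Vd d) : ℝ := ∫ y : Vd d, Kf ρ x y * (Wf S x - Wf S y)

lemma KW_integrable {d : ℕ} {ρ S : ℝ} (hS : 0 ≤ S) (x : Vd d) :
    Integrable (fun y : Vd d => Kf ρ x y * (Wf S x - Wf S y)) := by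
  refine integrable_bdd volume ?_ (1 * S ^ 2) (‖x‖ + ρ) ?_ ?_
  · exact ((measurable_Kf ρ).comp (measurable_const.prodMk measurable_id)).mul
      (measurable_const.sub (Wf_adm hS).meas)
  · intro y
    rw [abs_mul, abs_of_nonneg (Kf_nonneg _ _ _)]
    gcongr
    · exact Kf_le_one _ _ _
    · have h1 := (Wf_adm (d := d) hS).nonneg x
      have h2 := (Wf_adm (d := d) hS).le x
      have h3 := (Wf_adm (d := d) hS).nonneg y
      have h4 := (Wf_adm (d := d) hS).le y
      rw [abs_le]; constructor <;> linarith
  · intro y hy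
    unfold Kf
    rw [if_neg, zero_mul]
    rw [not_lt, norm_sub_rev]
    linarith [norm_sub_norm_le y x]

lemma LW_eq {d : ℕ} {ρ R : ℝ} (hρ : 0 < ρ) (hR : 0 ≤ R) {x : Vd d} (hx : ‖x‖ ≤ R) : LW ρ (R + ρ) x = Jc d ρ := by
  rw [← (Lquad hρ x).2]
  unfold LW
  congr 1
  funext y
  unfold Kf
  split_ifs with h
  · have h1 : ‖y‖ ≤ R + ρ := by
      have := norm_le_norm_add_norm_sub' y x
      rw [norm_sub_rev] at this
      linarith
    have h2 : ‖y‖ ^ 2 ≤ (R + ρ) ^ 2 := by gcongr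
    have h3 : ‖x‖ ^ 2 ≤ (R + ρ) ^ 2 := by gcongr; linarith
    unfold Wf
    rw [max_eq_left (by linarith), max_eq_left (by linarith)]; ring
  · ring

lemma LW_le {d : ℕ} {ρ S : ℝ} (hρ : 0 < ρ) (hS : 0 ≤ S) {x : Vd d} (hx : ‖x‖ ≤ S) : LW ρ S x ≤ Jc d ρ := by
  rw [← (Lquad hρ x).2]
  unfold LW
  refine integral_mono (KW_integrable hS x) (Lquad hρ x).1 fun y => ?_
  refine mul_le_mul_of_nonneg_left ?_ (Kf_nonneg _ _ _)
  have h3 : ‖x‖ ^ 2 ≤ S ^ 2 := by gcongr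
  unfold Wf
  rw [max_eq_left (a := S ^ 2 - ‖x‖ ^ 2) (by linarith)]
  linarith [le_max_left (S ^ 2 - ‖y‖ ^ 2) 0]

lemma LW_abs {d : ℕ} (ρ : ℝ) {S : ℝ} (hS : 0 ≤ S) (x : Vd d) :
    -(S ^ 2 * volume.real (Metric.ball (0 : Vd d) ρ)) ≤ LW ρ S x := by
  have hIntg : Integrable (fun y : Vd d => -(S ^ 2) * (Metric.ball x ρ).indicator (fun _ => (1:ℝ)) y) :=
    (((integrable_indicator_iff measurableSet_ball).mpr (integrableOn_const measure_ball_lt_top.ne))).const_mul _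
  have e : ∫ y : Vd d, -(S ^ 2) * (Metric.ball x ρ).indicator (fun _ => (1:ℝ)) y
      = -(S ^ 2 * volume.real (Metric.ball (0 : Vd d) ρ)) := by
    rw [integral_const_mul, ind_integral measurableSet_ball, measureReal_def, measureReal_def,
      Measure.addHaar_ball_center]; ring
  rw [← e]
  refine integral_mono hIntg (KW_integrable hS x) fun y => ?_
  have h1 := (Wf_adm (d := d) hS).nonneg x
  have h4 := (Wf_adm (d := d) hS).le y
  rw [ind_if (Metric.ball x ρ) (‖x - y‖ < ρ) y (by rw [mem_ball_iff_norm, norm_sub_rev])]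
  unfold Kf
  simp only
  split_ifs
  · linarith
  · simp

/-- Euler-Lagrange pairing. -/
lemma EnB_W {d : ℕ} {ρ S L M : ℝ} (hρ : 0 < ρ) (hS : 0 ≤ S) {F : Vd d → ℝ} (h : Adm L M F) :
    Integrable (fun x => F x * LW ρ S x) ∧ EnB ρ F (Wf S) = 2 * ∫ x, F x * LW ρ S x := by
  set a : Vd d × Vd d → ℝ := fun z => F z.1 * (Kf ρ z.1 z.2 * (Wf S z.1 - Wf S z.2)) with ha
  have hW := (Wf_adm (d := d) hS)
  have hM : 0 ≤ M := (h.nonneg 0).trans (h.le 0)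
  have ia : Integrable a := by
    refine integrable_bdd _ ?_ (M * (1 * S ^ 2)) (L + ρ) ?_ ?_
    · exact (h.meas.comp measurable_fst).mul ((measurable_Kf ρ).mul
        ((hW.meas.comp measurable_fst).sub (hW.meas.comp measurable_snd)))
    · rintro ⟨x, y⟩
      simp only [ha]
      rw [abs_mul, abs_mul, abs_of_nonneg (Kf_nonneg _ _ _), abs_of_nonneg (h.nonneg _)]
      have h1 := hW.nonneg x
      have h2 := hW.le x
      have h3 := hW.nonneg y
      have h4 := hW.le y
      have h5 : |Wf S x - Wf S y| ≤ S ^ 2 := by rw [abs_le]; constructor <;> linarith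
      gcongr
      · exact mul_nonneg (Kf_nonneg _ _ _) (abs_nonneg _)
      · exact h.le x
      · exact Kf_le_one _ _ _
    · rintro ⟨x, y⟩ hz
      simp only [ha]
      by_cases hx : L ≤ ‖x‖
      · rw [h.supp x hx]; ring
      · push Not at hx
        have : ¬ ‖x - y‖ < ρ := by
          intro hlt
          have h2 : ‖y‖ ≤ ‖x‖ + ‖x - y‖ := by rw [norm_sub_rev]; exact norm_le_norm_add_norm_sub' y x
          rw [Prod.norm_mk, le_max_iff] at hz
          rcases hz with hz | hz <;> linarith
        unfold Kf; rw [if_neg this]; ring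
  have e1 : ∫ z, a z = ∫ x, F x * LW ρ S x := by
    rw [Measure.volume_eq_prod, integral_prod _ ia]
    simp only [ha, integral_const_mul, LW]
  have e2 : ∫ z : Vd d × Vd d, a z.swap = ∫ z, a z := by
    exact (Measure.measurePreserving_swap (μ := (volume : Measure (Vd d))) (ν := (volume : Measure (Vd d)))).integral_comp' (f := MeasurableEquiv.prodComm) a
  have i2 : Integrable (fun z : Vd d × Vd d => a z.swap) := ia.swap
  constructor
  · have := ia.integral_prod_left
    simpa only [ha, integral_const_mul, LW] using this
  · have : ∀ z, gB ρ F (Wf S) z = a z + a z.swap := by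
      intro z
      simp only [gB, ha, Prod.fst_swap, Prod.snd_swap, Kf_comm ρ z.2 z.1]; ring
    unfold EnB
    simp only [this]
    rw [integral_add ia i2, e2, e1]; ring

lemma EnB_expand {d : ℕ} {ρ L M L' M' : ℝ} (hρ : 0 < ρ) {F G : Vd d → ℝ} (hF : Bd L M F) (hG : Bd L' M' G) (c : ℝ) :
    2 * c * EnB ρ F G - c ^ 2 * EnB ρ G G ≤ EnB ρ F F := by
  have i1 := gB_integrable hρ hF hF
  have i2 := gB_integrable hρ hF hG
  have i3 := gB_integrable hρ hG hG
  unfold EnB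
  rw [← integral_const_mul, ← integral_const_mul, ← integral_sub (i2.const_mul _) (i3.const_mul _)]
  refine integral_mono ((i2.const_mul _).sub (i3.const_mul _)) i1 fun z => ?_
  simp only [gB, Pi.sub_apply]
  have := Kf_nonneg ρ z.1 z.2
  nlinarith [mul_nonneg this (sq_nonneg ((F z.1 - F z.2) - c * (G z.1 - G z.2)))]

lemma radial_int {d : ℕ} (hd : 1 ≤ d) {s : ℝ} (hs : 0 ≤ s) (f : ℝ → ℝ) (hf : ∀ y, s ≤ y → f y = 0) :
    ∫ x : Vd d, f ‖x‖ = d * ballVol d * ∫ y in (0:ℝ)..s, y ^ (d - 1) * f y := by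
  have : Nonempty (Fin d) := ⟨⟨0, hd⟩⟩
  rw [integral_fun_norm_addHaar]
  simp only [finrank_euclideanSpace, Fintype.card_fin, smul_eq_mul, nsmul_eq_mul]
  rw [intervalIntegral.integral_of_le hs, ← mul_assoc]
  congr 1
  rw [← setIntegral_eq_of_subset_of_forall_sdiff_eq_zero measurableSet_Ioi Set.Ioc_subset_Ioi_self]
  intro y hy
  have : s ≤ y := by
    by_contra hlt; push Not at hlt
    exact hy.2 ⟨hy.1, hlt.le⟩
  rw [hf y this, mul_zero]

lemma Jc_eq {d : ℕ} (hd : 1 ≤ d) {ρ : ℝ} (hρ : 0 < ρ) : Jc d ρ = d * ballVol d * ρ ^ (d + 2) / (d + 2) := by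
  unfold Jc
  rw [radial_int hd hρ.le (fun r => (if r < ρ then 1 else 0) * r ^ 2) (fun y hy => by simp [not_lt.mpr hy])]
  have : ∫ y in (0:ℝ)..ρ, y ^ (d - 1) * ((if y < ρ then 1 else 0) * y ^ 2) = ∫ y in (0:ℝ)..ρ, y ^ (d + 1) := by
    rw [intervalIntegral.integral_of_le hρ.le, intervalIntegral.integral_of_le hρ.le,
      integral_Ioc_eq_integral_Ioo, integral_Ioc_eq_integral_Ioo]
    refine setIntegral_congr_fun measurableSet_Ioo fun y hy => ?_
    simp only [if_pos hy.2, one_mul, ← pow_add]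
    congr 1; omega
  rw [this, integral_pow]
  push_cast
  simp
  ring

def tauf (d : ℕ) (S : ℝ) : ℝ := 2 * ballVol d / (d + 2) * S ^ (d + 2)

lemma Wf_int {d : ℕ} (hd : 1 ≤ d) {S : ℝ} (hS : 0 ≤ S) : ∫ x : Vd d, Wf S x = tauf d S := by
  unfold Wf
  rw [radial_int hd hS (fun r => max (S ^ 2 - r ^ 2) 0) (fun y hy => by
    apply max_eq_right; have := pow_le_pow_left₀ hS hy 2; linarith)]
  have : ∫ y in (0:ℝ)..S, y ^ (d - 1) * max (S ^ 2 - y ^ 2) 0 = ∫ y in (0:ℝ)..S, (S ^ 2 * y ^ (d - 1) - y ^ (d + 1)) := by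
    refine intervalIntegral.integral_congr fun y hy => ?_
    rw [Set.uIcc_of_le hS] at hy
    have h2 : y ^ 2 ≤ S ^ 2 := pow_le_pow_left₀ hy.1 hy.2 2
    rw [max_eq_left (by linarith), mul_sub, ← pow_add]
    rw [show d - 1 + 2 = d + 1 by omega]; ring
  rw [this, intervalIntegral.integral_sub (Continuous.intervalIntegrable (by fun_prop) _ _) (Continuous.intervalIntegrable (by fun_prop) _ _), intervalIntegral.integral_const_mul,
    integral_pow, integral_pow]
  obtain ⟨k, rfl⟩ : ∃ k, d = k + 1 := ⟨d - 1, by omega⟩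
  unfold tauf
  push_cast
  simp
  field_simp
  ring

/-- The lower bound for the nonlocal energy. -/
lemma energy_lower {d : ℕ} (hd : 1 ≤ d) {ρ L M R : ℝ} (hρ : 0 < ρ) (hR : 0 ≤ R) (hRL : R ≤ L) {F : Vd d → ℝ} (h : Adm L M F)
    (hU : volume.real (Uset F) ≤ volume.real (Metric.ball (0 : Vd d) R)) :
    2 * Jc d ρ * (∫ x, F x) ^ 2 ≤ tauf d (R + ρ) * EnB ρ F F := by
  set S := R + ρ with hSdef
  have hS : 0 < S := by positivity
  have hω := ballVol_pos d
  have hτ : 0 < tauf d S := by unfold tauf; positivity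
  have hJ : 0 ≤ Jc d ρ := by rw [Jc_eq hd hρ]; positivity
  have hM : 0 ≤ M := (h.nonneg 0).trans (h.le 0)
  have hI : 0 ≤ ∫ x, F x := integral_nonneg h.nonneg
  have hWadm := Wf_adm (d := d) hS.le
  have hWW : EnB ρ (Wf (d := d) S) (Wf (d := d) S) ≤ 2 * Jc d ρ * tauf d S := by
    rw [(EnB_W hρ hS.le hWadm).2, ← Wf_int hd hS.le, mul_assoc]
    refine mul_le_mul_of_nonneg_left ?_ (by norm_num : (0:ℝ) ≤ 2)
    rw [← integral_const_mul]
    refine integral_mono (EnB_W hρ hS.le hWadm).1 (hWadm.integrable.const_mul _) fun x => ?_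
    by_cases hx : ‖x‖ ≤ S
    · have := LW_le hρ hS.le hx
      simp only
      rw [mul_comm]
      exact mul_le_mul_of_nonneg_right this (hWadm.nonneg x)
    · simp [hWadm.supp x (not_le.mp hx).le]
  set c := (∫ x, F x) / tauf d S with hc
  have hc0 : 0 ≤ c := by positivity
  set C := Jc d ρ + S ^ 2 * volume.real (Metric.ball (0 : Vd d) ρ) with hC
  have hC0 : 0 ≤ C := by positivity
  have key : ∀ ε > 0, 4 * c * Jc d ρ * (∫ x, F x) - 2 * c ^ 2 * Jc d ρ * tauf d S ≤ EnB ρ F F + 4 * c * M * C * ε := by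
    intro ε hε
    obtain ⟨G, hG, hGi, hGe, hGd⟩ := polar_inf hd hρ hRL h hU ε hε
    have h1 := EnB_expand hρ hG.bd hWadm.bd c
    have h2 := (EnB_W (S := S) hρ hS.le hG)
    have h3 : Jc d ρ * (∫ x, G x) - M * C * volume.real (Dout R G) ≤ ∫ x, G x * LW ρ S x := by
      have i3 := (ind_integrable (meas_Dout R hG.meas) L fun x hx => (hG.lt_of_pos hx.1).le)
      rw [← ind_integral (meas_Dout R hG.meas), ← integral_const_mul, ← integral_const_mul,
        ← integral_sub (hG.integrable.const_mul _) (i3.const_mul _)]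
      refine integral_mono ((hG.integrable.const_mul _).sub (i3.const_mul _)) h2.1 fun x => ?_
      simp only [Pi.sub_apply, ind_Dout]
      have hg := hG.nonneg x
      split_ifs with hh
      · have h4 := LW_abs ρ hS.le x
        have h5 : G x * C ≤ M * C := mul_le_mul_of_nonneg_right (hG.le x) hC0
        have h6 : G x * (-(S ^ 2 * volume.real (Metric.ball (0 : Vd d) ρ))) ≤ G x * LW ρ S x :=
          mul_le_mul_of_nonneg_left h4 hg
        rw [hC] at h5 ⊢
        nlinarith
      · rcases hg.lt_or_eq with h0 | h0
        · have : ‖x‖ ≤ R := by by_contra hcon; exact hh ⟨h0, (not_le.mp hcon).le⟩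
          rw [hSdef, LW_eq hρ hR this]; linarith
        · rw [← h0]; simp
    rw [h2.2] at h1
    rw [hGi] at h3
    have h4 : M * C * volume.real (Dout R G) ≤ M * C * ε := by gcongr
    have h5 : c * (Jc d ρ * (∫ x, F x) - M * C * ε) ≤ c * ∫ x, G x * LW ρ S x :=
      mul_le_mul_of_nonneg_left (by linarith) hc0
    have h6 : c ^ 2 * EnB ρ (Wf (d := d) S) (Wf (d := d) S) ≤ c ^ 2 * (2 * Jc d ρ * tauf d S) :=
      mul_le_mul_of_nonneg_left hWW (sq_nonneg c)
    linarith
  have fin : 4 * c * Jc d ρ * (∫ x, F x) - 2 * c ^ 2 * Jc d ρ * tauf d S ≤ EnB ρ F F := by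
    refine le_of_forall_pos_le_add fun ε hε => ?_
    have hp : 0 < 4 * c * M * C + 1 := by positivity
    refine (key (ε / (4 * c * M * C + 1)) (by positivity)).trans ?_
    have : 4 * c * M * C * (ε / (4 * c * M * C + 1)) ≤ ε := by
      rw [mul_div_assoc', div_le_iff₀ hp]; nlinarith
    linarith
  have e : tauf d S * (4 * c * Jc d ρ * (∫ x, F x) - 2 * c ^ 2 * Jc d ρ * tauf d S) = 2 * Jc d ρ * (∫ x, F x) ^ 2 := by
    rw [hc]; field_simp; ring
  rw [← e]
  exact mul_le_mul_of_nonneg_left fin hτ.le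



/-! ### Part 6: upper bound for the nonlocal energy -/

def DF {d : ℕ} (F : Vd d → ℝ) (y : Vd d) : ℝ := ∫ x, (F (x + y) - F x) ^ 2

lemma sq_int {d : ℕ} {L M : ℝ} {F : Vd d → ℝ} (h : Bd L M F) (a b : Vd d) :
    Integrable (fun x => (F (x + a) - F (x + b)) ^ 2) := by
  have hM : 0 ≤ M := (abs_nonneg _).trans (h.le 0)
  refine integrable_bdd volume ?_ ((2 * M) ^ 2) (L + ‖a‖ + ‖b‖) ?_ ?_
  · exact (((h.meas.comp (measurable_add_const a)).sub (h.meas.comp (measurable_add_const b))).pow_const 2)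
  · intro x
    rw [abs_pow]
    have h1 : |F (x + a) - F (x + b)| ≤ 2 * M := by
      linarith [abs_sub (F (x + a)) (F (x + b)), h.le (x + a), h.le (x + b)]
    gcongr
  · intro x hx
    have h1 : ‖x‖ ≤ ‖x + a‖ + ‖a‖ := by
      have := norm_sub_le (x + a) a; rwa [add_sub_cancel_right] at this
    have h2 : ‖x‖ ≤ ‖x + b‖ + ‖b‖ := by
      have := norm_sub_le (x + b) b; rwa [add_sub_cancel_right] at this
    rw [h.supp _ (by linarith [norm_nonneg b]), h.supp _ (by linarith [norm_nonneg a])]; ring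

lemma DF_diff {d : ℕ} (F : Vd d → ℝ) (a b : Vd d) :
    ∫ x, (F (x + a) - F (x + b)) ^ 2 = DF F (a - b) := by
  unfold DF
  rw [← integral_add_right_eq_self (fun x => (F (x + (a - b)) - F x) ^ 2) b]
  congr 1; funext x; congr 3; abel

lemma DF_nonneg {d : ℕ} (F : Vd d → ℝ) (y : Vd d) : 0 ≤ DF F y := integral_nonneg fun _ => sq_nonneg _

lemma DF_neg {d : ℕ} (F : Vd d → ℝ) (y : Vd d) : DF F (-y) = DF F y := by
  have h1 := DF_diff F y 0
  have h2 := DF_diff F 0 y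
  rw [zero_sub] at h2
  rw [sub_zero] at h1
  rw [← h1, ← h2]
  congr 1; funext x; ring

lemma DF_par {d : ℕ} {L M : ℝ} {F : Vd d → ℝ} (h : Bd L M F) (a b : Vd d) :
    DF F (a + b) + DF F (a - b) ≤ 2 * DF F a + 2 * DF F b := by
  have e1 := DF_diff F (a + b) 0
  have e2 := DF_diff F a b
  have e3 := DF_diff F a 0
  have e4 := DF_diff F (a + b) a
  have e5 := DF_diff F (a + b) b
  have e6 := DF_diff F b 0
  rw [sub_zero] at e1 e3 e6
  rw [add_sub_cancel_left] at e4
  rw [add_sub_cancel_right] at e5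
  have hh : ∫ x, ((F (x + (a + b)) - F (x + 0)) ^ 2 + (F (x + a) - F (x + b)) ^ 2) ≤
      ∫ x, (((F (x + a) - F (x + 0)) ^ 2 + (F (x + (a + b)) - F (x + a)) ^ 2) +
        ((F (x + (a + b)) - F (x + b)) ^ 2 + (F (x + b) - F (x + 0)) ^ 2)) := by
    refine integral_mono ((sq_int h _ _).add (sq_int h _ _))
      (((sq_int h _ _).add (sq_int h _ _)).add ((sq_int h _ _).add (sq_int h _ _))) fun x => ?_
    simp only
    nlinarith [sq_nonneg (F (x + 0) - F (x + a) + F (x + (a + b)) - F (x + b))]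
  have e7 := integral_add ((sq_int h a 0).add (sq_int h (a + b) a)) ((sq_int h (a + b) b).add (sq_int h b 0))
  simp only [Pi.add_apply] at e7
  rw [integral_add (sq_int h _ _) (sq_int h _ _), e7,
    integral_add (sq_int h _ _) (sq_int h _ _), integral_add (sq_int h _ _) (sq_int h _ _),
    e1, e2, e3, e4, e5, e6] at hh
  linarith

lemma DF_meas {d : ℕ} {F : Vd d → ℝ} (h : Measurable F) : Measurable (DF F) := by
  unfold DF
  refine (StronglyMeasurable.integral_prod_right (f := fun y x => (F (x + y) - F x) ^ 2) ?_).measurable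
  refine Measurable.stronglyMeasurable ?_
  exact ((h.comp (by fun_prop : Measurable fun z : Vd d × Vd d => z.2 + z.1)).sub (h.comp measurable_snd)).pow_const 2

lemma DF_le {d : ℕ} {L M : ℝ} {F : Vd d → ℝ} (h : Bd L M F) (y : Vd d) : DF F y ≤ 4 * ∫ x, (F x) ^ 2 := by
  have hM : 0 ≤ M := (abs_nonneg _).trans (h.le 0)
  have i0 : Integrable (fun x => (F x) ^ 2) := by
    refine integrable_bdd volume (h.meas.pow_const 2) (M ^ 2) L ?_ ?_
    · intro x; rw [abs_pow]; gcongr; exact h.le x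
    · intro x hx; rw [h.supp x hx]; ring
  have i1 : Integrable (fun x => (F (x + y)) ^ 2) := i0.comp_add_right y
  have e : ∫ x, (F (x + y)) ^ 2 = ∫ x, (F x) ^ 2 := integral_add_right_eq_self (fun x => F x ^ 2) y
  have i2 := sq_int h y 0
  simp only [add_zero] at i2
  have : DF F y ≤ ∫ x, (2 * (F (x + y)) ^ 2 + 2 * (F x) ^ 2) := by
    refine integral_mono i2 ((i1.const_mul 2).add (i0.const_mul 2)) fun x => ?_
    simp only
    nlinarith [sq_nonneg (F (x + y) + F x)]
  rw [integral_add (i1.const_mul 2) (i0.const_mul 2), integral_const_mul, integral_const_mul, e] at this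
  linarith

def cut {d : ℕ} (ρ : ℝ) (h : Vd d) : ℝ := if ‖h‖ < ρ then 1 else 0

lemma EnB_eq {d : ℕ} {ρ L M : ℝ} (hρ : 0 < ρ) {F : Vd d → ℝ} (h : Bd L M F) :
    EnB ρ F F = ∫ y, cut ρ y * DF F y := by
  have hmp := measurePreserving_prod_add (volume : Measure (Vd d)) (volume : Measure (Vd d))
  have i := gB_integrable hρ h h
  have e1 : EnB ρ F F = ∫ z : Vd d × Vd d, cut ρ z.2 * (F (z.1 + z.2) - F z.1) ^ 2 := by
    unfold EnB
    rw [Measure.volume_eq_prod, ← MeasurePreserving.integral_comp' (f := MeasurableEquiv.shearAddRight (Vd d)) hmp]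
    congr 1; funext z
    simp only [gB, Kf, cut, MeasurableEquiv.shearAddRight, MeasurableEquiv.coe_mk, Equiv.prodShear_apply, Equiv.refl_apply, Equiv.coe_addLeft]
    rw [sub_add_cancel_left, norm_neg]; ring
  have i2 : Integrable (fun z : Vd d × Vd d => cut ρ z.2 * (F (z.1 + z.2) - F z.1) ^ 2) (volume.prod volume) := by
    have := hmp.integrable_comp_of_integrable (g := gB ρ F F) i
    convert this using 1
    funext z
    simp only [gB, Kf, cut, Function.comp]
    rw [sub_add_cancel_left, norm_neg]; ring
  rw [e1, Measure.volume_eq_prod, integral_prod_symm _ i2]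
  simp only [integral_const_mul, DF]

def Pc {d : ℕ} (s : Finset (Fin d)) (h : Vd d) : Vd d := WithLp.toLp 2 (fun i => if i ∈ s then h i else 0)

lemma Pc_meas {d : ℕ} (s : Finset (Fin d)) : Measurable (Pc (d := d) s) := by
  unfold Pc
  refine (PiLp.continuous_toLp 2 (fun _ : Fin d => ℝ)).measurable.comp ?_
  refine measurable_pi_iff.mpr fun i => ?_
  split_ifs
  · fun_prop
  · exact measurable_const

lemma cutDF_int {d : ℕ} (ρ : ℝ) {L M : ℝ} {F : Vd d → ℝ} (h : Bd L M F) (s : Finset (Fin d)) :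
    Integrable (fun y => cut ρ y * DF F (Pc s y)) := by
  refine integrable_bdd volume ((meas_cut ρ).mul ((DF_meas h.meas).comp (Pc_meas s))) (1 * (4 * ∫ x, (F x) ^ 2)) ρ ?_ ?_
  · intro y
    rw [abs_mul, abs_of_nonneg (DF_nonneg _ _)]
    have := DF_le h (Pc s y)
    have : |cut ρ y| ≤ 1 := by unfold cut; split_ifs <;> simp
    gcongr
    exact DF_nonneg _ _
  · intro y hy
    unfold cut
    rw [if_neg (not_lt.mpr hy), zero_mul]

lemma flip_apply {d : ℕ} (i j : Fin d) (y : Vd d) :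
    refl (EuclideanSpace.single i (1:ℝ)) 0 y j = if j = i then - y j else y j := by
  unfold refl
  simp only [PiLp.add_apply, PiLp.smul_apply, EuclideanSpace.inner_single_left, EuclideanSpace.single_apply]
  split_ifs with hh
  · subst hh; simp; ring
  · simp

lemma flip_norm {d : ℕ} (i : Fin d) (y : Vd d) :
    ‖refl (EuclideanSpace.single i (1:ℝ)) 0 y‖ = ‖y‖ := by
  have := norm_refl_sq (d := d) (n := EuclideanSpace.single i (1:ℝ)) (by simp) 0 y
  rw [← sq_eq_sq₀ (norm_nonneg _) (norm_nonneg _), this]; ring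

lemma cut_step {d : ℕ} (ρ : ℝ) {L M : ℝ} {F : Vd d → ℝ} (h : Bd L M F) (s : Finset (Fin d)) (i : Fin d) (hi : i ∉ s) :
    ∫ y, cut ρ y * DF F (Pc (insert i s) y) ≤ (∫ y, cut ρ y * DF F (Pc s y)) + ∫ y, cut ρ y * DF F (Pc {i} y) := by
  set T : Vd d → Vd d := refl (EuclideanSpace.single i (1:ℝ)) 0 with hT
  have hmp : MeasurePreserving T volume volume := refl_mp (by simp) 0
  have hinv : Function.Involutive T := fun x => refl_refl (by simp) 0 x
  have g1 := cutDF_int ρ h (insert i s)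
  have e : ∫ y, cut ρ (T y) * DF F (Pc (insert i s) (T y)) = ∫ y, cut ρ y * DF F (Pc (insert i s) y) := by
    exact MeasurePreserving.integral_comp' (f := (⟨hinv.toPerm, hmp.measurable, hmp.measurable⟩ : Vd d ≃ᵐ Vd d)) hmp
      (fun y => cut ρ y * DF F (Pc (insert i s) y))
  have g2 : Integrable fun y => cut ρ (T y) * DF F (Pc (insert i s) (T y)) :=
    hmp.integrable_comp_of_integrable g1
  have p1 : ∀ y, Pc (insert i s) y = Pc s y + Pc {i} y := by
    intro y; ext j
    simp only [Pc, PiLp.add_apply, Finset.mem_insert, Finset.mem_singleton]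
    by_cases hj : j = i
    · subst hj; simp [hi]
    · simp [hj]
  have p2 : ∀ y, Pc (insert i s) (T y) = Pc s y - Pc {i} y := by
    intro y; ext j
    simp only [Pc, PiLp.sub_apply, Finset.mem_insert, Finset.mem_singleton, hT, flip_apply]
    by_cases hj : j = i
    · subst hj; simp [hi]
    · simp [hj]
  have hc : ∀ y, cut ρ (T y) = cut ρ y := by
    intro y; unfold cut; rw [hT, flip_norm]
  have m : ∫ y, (cut ρ y * DF F (Pc (insert i s) y) + cut ρ (T y) * DF F (Pc (insert i s) (T y))) ≤
      ∫ y, (2 * (cut ρ y * DF F (Pc s y)) + 2 * (cut ρ y * DF F (Pc {i} y))) := by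
    refine integral_mono (g1.add g2) (((cutDF_int ρ h s).const_mul 2).add ((cutDF_int ρ h {i}).const_mul 2)) fun y => ?_
    simp only [hc, p2]
    rw [p1]
    have hc0 : 0 ≤ cut ρ y := by unfold cut; split_ifs <;> norm_num
    nlinarith [mul_le_mul_of_nonneg_left (DF_par h (Pc s y) (Pc {i} y)) hc0]
  rw [integral_add g1 g2, e, integral_add ((cutDF_int ρ h s).const_mul 2) ((cutDF_int ρ h {i}).const_mul 2),
    integral_const_mul, integral_const_mul] at m
  linarith

lemma cut_sum {d : ℕ} (ρ : ℝ) {L M : ℝ} {F : Vd d → ℝ} (h : Bd L M F) (s : Finset (Fin d)) :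
    ∫ y, cut ρ y * DF F (Pc s y) ≤ ∑ i ∈ s, ∫ y, cut ρ y * DF F (Pc {i} y) := by
  induction s using Finset.induction_on with
  | empty =>
    have : ∀ y : Vd d, DF F (Pc ∅ y) = 0 := by
      intro y
      have : Pc (d := d) ∅ y = 0 := by ext j; simp [Pc]
      rw [this]; simp [DF]
    simp [this]
  | insert i s hi ih =>
    rw [Finset.sum_insert hi]
    linarith [cut_step ρ h s i hi]

lemma EnB_le {d : ℕ} {ρ L M : ℝ} (hρ : 0 < ρ) {F : Vd d → ℝ} (h : Bd L M F) :
    EnB ρ F F ≤ ∑ i, ∫ y, cut ρ y * DF F (Pc {i} y) := by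
  rw [EnB_eq hρ h]
  refine le_trans (le_of_eq ?_) (cut_sum ρ h Finset.univ)
  congr 1; funext y
  have : Pc Finset.univ y = y := by ext j; simp [Pc]
  rw [this]

/-- second moments -/
lemma cut_coord_sq {d : ℕ} (hd : 1 ≤ d) (ρ : ℝ) (i : Fin d) :
    Integrable (fun y : Vd d => cut ρ y * (y i) ^ 2) ∧ ∫ y : Vd d, cut ρ y * (y i) ^ 2 = Jc d ρ / d := by
  have hIntg : ∀ i : Fin d, Integrable (fun y : Vd d => cut ρ y * (y i) ^ 2) := by
    intro i
    refine integrable_bdd volume ((meas_cut ρ).mul (by fun_prop)) (1 * ρ ^ 2) ρ ?_ ?_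
    · intro y
      by_cases hy : ‖y‖ < ρ
      · have : |y i| ≤ ‖y‖ := by simpa using PiLp.norm_apply_le y i
        unfold cut
        rw [if_pos hy, abs_mul, abs_one, abs_pow]
        gcongr; linarith
      · unfold cut; rw [if_neg hy, zero_mul, abs_zero]; positivity
    · intro y hy
      unfold cut
      rw [if_neg (not_lt.mpr hy), zero_mul]
  refine ⟨hIntg i, ?_⟩
  have hsym : ∀ j, ∫ y : Vd d, cut ρ y * (y j) ^ 2 = ∫ y : Vd d, cut ρ y * (y i) ^ 2 := by
    intro j
    have hmp := (LinearIsometryEquiv.piLpCongrLeft 2 ℝ ℝ (Equiv.swap i j)).measurePreserving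
    rw [← hmp.integral_comp (LinearIsometryEquiv.piLpCongrLeft 2 ℝ ℝ (Equiv.swap i j)).toHomeomorph.measurableEmbedding (fun y => cut ρ y * (y i) ^ 2)]
    congr 1; funext y
    unfold cut
    rw [LinearIsometryEquiv.norm_map, LinearIsometryEquiv.piLpCongrLeft_apply]
    simp
  have hs : Jc d ρ = ∑ j, ∫ y : Vd d, cut ρ y * (y j) ^ 2 := by
    rw [← integral_finsetSum _ fun j _ => hIntg j]
    unfold Jc
    congr 1; funext y
    rw [← Finset.mul_sum, EuclideanSpace.real_norm_sq_eq]; rfl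
  have hd0 : (d:ℝ) ≠ 0 := by exact_mod_cast (by omega : d ≠ 0)
  rw [hs, Finset.sum_congr rfl fun j _ => hsym j]
  simp
  field_simp



/-! ### Part 7: embedding of lattice functions -/

def fl {d : ℕ} (x : Vd d) : Site d := fun i => ⌊x i⌋

lemma fl_meas {d : ℕ} : Measurable (fl (d := d)) :=
  measurable_pi_iff.mpr fun i => Int.measurable_floor.comp (by fun_prop)

def bx {d : ℕ} (a b : Fin d → ℝ) : Set (Vd d) := {x | ∀ j, a j ≤ x j ∧ x j < b j}

lemma bx_eq {d : ℕ} (a b : Fin d → ℝ) :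
    bx a b = (@WithLp.ofLp 2 (Fin d → ℝ)) ⁻¹' (Set.univ.pi fun i => Set.Ico (a i) (b i)) := by
  ext x; simp [bx]

lemma bx_meas {d : ℕ} (a b : Fin d → ℝ) : MeasurableSet (bx a b) := by
  rw [bx_eq]
  exact (PiLp.volume_preserving_ofLp (Fin d)).measurable (MeasurableSet.univ_pi fun i => measurableSet_Ico)

lemma bx_vol' {d : ℕ} (a b : Fin d → ℝ) : volume (bx a b) = ∏ i, ENNReal.ofReal (b i - a i) := by
  rw [bx_eq, (PiLp.volume_preserving_ofLp (Fin d)).measure_preimage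
    (MeasurableSet.univ_pi fun i => measurableSet_Ico).nullMeasurableSet, Real.volume_pi_Ico]

lemma bx_vol {d : ℕ} (a b : Fin d → ℝ) (h : ∀ i, a i ≤ b i) : volume.real (bx a b) = ∏ i, (b i - a i) := by
  rw [measureReal_def, bx_vol', ENNReal.toReal_prod]
  exact Finset.prod_congr rfl fun i _ => ENNReal.toReal_ofReal (by linarith [h i])

lemma bx_fin {d : ℕ} (a b : Fin d → ℝ) : volume (bx a b) ≠ ⊤ := by
  rw [bx_vol']; exact ENNReal.prod_ne_top fun i _ => ENNReal.ofReal_ne_top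

def Cm {d : ℕ} (m : Site d) : Set (Vd d) := bx (fun j => (m j : ℝ)) (fun j => (m j : ℝ) + 1)

lemma mem_Cm {d : ℕ} (m : Site d) (x : Vd d) : x ∈ Cm m ↔ fl x = m := by
  simp only [Cm, bx, fl, Set.mem_setOf_eq, funext_iff, Int.floor_eq_iff]

lemma Cm_vol {d : ℕ} (m : Site d) : volume.real (Cm m) = 1 := by
  unfold Cm
  rw [bx_vol _ _ fun i => by linarith]
  simp

lemma tile {d : ℕ} {G : Vd d → ℝ} (hG : Integrable G) : HasSum (fun m : Site d => ∫ x in Cm m, G x) (∫ x, G x) := by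
  have hU : (⋃ m : Site d, Cm m) = Set.univ := by
    ext x; simp [mem_Cm]
  have := hasSum_integral_iUnion (s := fun m : Site d => Cm m) (f := G) (μ := volume) (fun m => bx_meas _ _) ?_ hG.integrableOn
  · rwa [hU, setIntegral_univ] at this
  · intro m m' hne
    refine Set.disjoint_left.mpr fun x hx hx' => hne ?_
    rw [mem_Cm] at hx hx'
    rw [← hx, hx']

lemma fl_bd {d : ℕ} {A : Set (Site d)} (hA : A.Finite) {f : Site d → ℝ} (h0 : ∀ x, 0 ≤ f x) (hf : ∀ x, x ∉ A → f x = 0) (R : ℝ) :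
    ∃ L M, R ≤ L ∧ Adm (d := d) L M (fun x => f (fl x)) := by
  obtain ⟨M, hM⟩ := (hA.image f).bddAbove
  have hb : Bornology.IsBounded (⋃ m ∈ A, Cm m) := by
    rw [Bornology.isBounded_biUnion hA]
    intro m _
    rw [isBounded_iff_forall_norm_le]
    refine ⟨Real.sqrt (∑ i, (|(m i : ℝ)| + 1) ^ 2), fun x hx => ?_⟩
    rw [EuclideanSpace.norm_eq]
    refine Real.sqrt_le_sqrt (Finset.sum_le_sum fun i _ => ?_)
    have := hx i
    rw [Real.norm_eq_abs]
    refine pow_le_pow_left₀ (abs_nonneg _) ?_ 2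
    rw [abs_le]
    constructor
    · linarith [neg_abs_le (m i : ℝ)]
    · linarith [le_abs_self (m i : ℝ)]
  obtain ⟨K, hK⟩ := isBounded_iff_forall_norm_le.mp hb
  refine ⟨max (K + 1) R, max M 0, le_max_right _ _, ?_, fun x => h0 _, fun x => ?_, fun x hx => ?_⟩
  · exact Measurable.comp (measurable_of_countable f) fl_meas
  · by_cases h : fl x ∈ A
    · exact (hM ⟨_, h, rfl⟩).trans (le_max_left _ _)
    · simp only [hf _ h]; exact le_max_right _ _
  · by_contra hne
    have : fl x ∈ A := by by_contra h; exact hne (hf _ h)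
    have := hK x (Set.mem_biUnion this ((mem_Cm _ x).mpr rfl))
    linarith [le_max_left (K + 1) R]

lemma fl_int {d : ℕ} {f : Site d → ℝ} (h : Integrable (fun x : Vd d => f (fl x))) :
    ∫ x : Vd d, f (fl x) = ∑' m, f m := by
  rw [← (tile h).tsum_eq]
  refine tsum_congr fun m => ?_
  rw [setIntegral_congr_fun (s := Cm m) (g := fun _ => f m) (bx_meas _ _) fun x hx => by
    simp only; rw [(mem_Cm m x).mp hx]]
  rw [setIntegral_const, Cm_vol]; simp

lemma fl_Uset {d : ℕ} {A : Set (Site d)} (hA : A.Finite) {f : Site d → ℝ} (hf : ∀ x, x ∉ A → f x = 0) :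
    volume.real (Uset (fun x : Vd d => f (fl x))) ≤ A.ncard := by
  have hsub : Uset (fun x : Vd d => f (fl x)) ⊆ ⋃ m ∈ hA.toFinset, Cm m := by
    intro x hx
    have : fl x ∈ A := by
      by_contra h
      have h1 : 0 < f (fl x) := hx
      rw [hf _ h] at h1; exact lt_irrefl _ h1
    exact Set.mem_biUnion (by simpa using this) ((mem_Cm _ x).mpr rfl)
  have hfin : volume (⋃ m ∈ hA.toFinset, Cm (d := d) m) ≠ ⊤ := by
    refine ne_top_of_le_ne_top ?_ (measure_biUnion_finset_le _ _)
    exact ENNReal.sum_ne_top.mpr fun m _ => bx_fin _ _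
  refine (measureReal_mono hsub hfin).trans ?_
  refine (measureReal_biUnion_finset_le _ _).trans ?_
  simp [Cm_vol, Set.ncard_eq_toFinset_card A hA]

lemma floor_add_lt {x t : ℝ} {m : ℤ} (h1 : (m:ℝ) ≤ x) (h2 : x < m + (1 - Int.fract t)) : ⌊x + t⌋ = m + ⌊t⌋ := by
  rw [Int.floor_eq_iff]
  have := Int.floor_add_fract t
  have := Int.fract_nonneg t
  push_cast
  constructor <;> linarith

lemma floor_add_ge {x t : ℝ} {m : ℤ} (h1 : (m:ℝ) + (1 - Int.fract t) ≤ x) (h2 : x < m + 1) : ⌊x + t⌋ = m + (⌊t⌋ + 1) := by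
  rw [Int.floor_eq_iff]
  have := Int.floor_add_fract t
  have := Int.fract_lt_one t
  push_cast
  constructor <;> linarith

lemma fl_shift {d : ℕ} (i : Fin d) (x y : Vd d) (m : Site d) (k : ℤ) (hx : fl x = m) (hk : ⌊x i + y i⌋ = m i + k) :
    fl (x + Pc {i} y) = m + k • unitVec d i := by
  funext j
  simp only [fl, Pc, PiLp.add_apply, Finset.mem_singleton, Pi.add_apply, Pi.smul_apply, unitVec]
  split_ifs with h
  · subst h; simp [hk]
  · have := congrFun hx j
    simp only [fl] at this
    simp [this]

lemma prod_one_but {d : ℕ} (i : Fin d) (g : Fin d → ℝ) (h : ∀ j, j ≠ i → g j = 1) : ∏ j, g j = g i := by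
  rw [Finset.prod_eq_single i]
  · intro j _ hj; exact h j hj
  · intro hh; exact absurd (Finset.mem_univ i) hh

lemma fl_cell {d : ℕ} (f : Site d → ℝ) (i : Fin d) (y : Vd d) (m : Site d) :
    ∫ x in Cm m, (f (fl (x + Pc {i} y)) - f (fl x)) ^ 2 =
      (1 - Int.fract (y i)) * (f (m + ⌊y i⌋ • unitVec d i) - f m) ^ 2
      + Int.fract (y i) * (f (m + (⌊y i⌋ + 1) • unitVec d i) - f m) ^ 2 := by
  set θ := Int.fract (y i) with hθ
  have hθ0 : 0 ≤ θ := Int.fract_nonneg _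
  have hθ1 : θ < 1 := Int.fract_lt_one _
  set S1 : Set (Vd d) := bx (fun j => (m j : ℝ)) (fun j => (m j : ℝ) + if j = i then 1 - θ else 1) with hS1
  set S2 : Set (Vd d) := bx (fun j => (m j : ℝ) + if j = i then 1 - θ else 0) (fun j => (m j : ℝ) + 1) with hS2
  have hU : Cm m = S1 ∪ S2 := by
    ext x
    constructor
    · intro hx
      by_cases h : x i < m i + (1 - θ)
      · left; intro j
        refine ⟨(hx j).1, ?_⟩
        beta_reduce
        split_ifs with hj
        · subst hj; exact h
        · exact (hx j).2
      · right; intro j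
        refine ⟨?_, (hx j).2⟩
        simp only
        split_ifs with hj
        · subst hj; exact not_lt.mp h
        · have := (hx j).1; simpa using this
    · rintro (hx | hx) <;> intro j <;> have h1 := hx j <;> simp only at h1 ⊢ <;> split_ifs at h1 <;>
        constructor <;> linarith
  have hdis : Disjoint S1 S2 := by
    refine Set.disjoint_left.mpr fun x h1 h2 => ?_
    have a1 := (h1 i).2
    have a2 := (h2 i).1
    simp only [if_true] at a1 a2
    linarith
  have v1 : volume.real S1 = 1 - θ := by
    rw [hS1, bx_vol _ _ fun j => by split_ifs <;> linarith, prod_one_but i]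
    · simp
    · intro j hj; simp [hj]
  have v2 : volume.real S2 = θ := by
    rw [hS2, bx_vol _ _ fun j => by split_ifs <;> linarith, prod_one_but i]
    · simp
    · intro j hj; simp [hj]
  have c1 : ∀ x ∈ S1, (f (fl (x + Pc {i} y)) - f (fl x)) ^ 2 = (f (m + ⌊y i⌋ • unitVec d i) - f m) ^ 2 := by
    intro x hx
    have hm : fl x = m := (mem_Cm m x).mp (by rw [hU]; exact Or.inl hx)
    have h1 := hx i
    simp only [if_true] at h1
    rw [fl_shift i x y m ⌊y i⌋ hm (floor_add_lt h1.1 h1.2), hm]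
  have c2 : ∀ x ∈ S2, (f (fl (x + Pc {i} y)) - f (fl x)) ^ 2 = (f (m + (⌊y i⌋ + 1) • unitVec d i) - f m) ^ 2 := by
    intro x hx
    have hm : fl x = m := (mem_Cm m x).mp (by rw [hU]; exact Or.inr hx)
    have h1 := hx i
    simp only [if_true] at h1
    rw [fl_shift i x y m (⌊y i⌋ + 1) hm (floor_add_ge h1.1 h1.2), hm]
  have i1 : IntegrableOn (fun x => (f (fl (x + Pc {i} y)) - f (fl x)) ^ 2) S1 :=
    (integrableOn_const (bx_fin _ _)).congr_fun (fun x hx => (c1 x hx).symm) (bx_meas _ _)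
  have i2 : IntegrableOn (fun x => (f (fl (x + Pc {i} y)) - f (fl x)) ^ 2) S2 :=
    (integrableOn_const (bx_fin _ _)).congr_fun (fun x hx => (c2 x hx).symm) (bx_meas _ _)
  rw [hU, setIntegral_union hdis (bx_meas _ _) i1 i2, setIntegral_congr_fun (bx_meas _ _) c1,
    setIntegral_congr_fun (bx_meas _ _) c2, setIntegral_const, setIntegral_const, v1, v2, smul_eq_mul, smul_eq_mul]

lemma Dl_summable {d : ℕ} {A : Set (Site d)} (hA : A.Finite) {f : Site d → ℝ} (hf : ∀ x, x ∉ A → f x = 0) (z : Site d) :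
    Summable fun x => (f (x + z) - f x) ^ 2 :=
  summ (shift_finite hA z) fun x hx => by rw [hf _ (not_mem_shift hx).1, hf _ (not_mem_shift hx).2]; ring

lemma Dl_neg {d : ℕ} (f : Site d → ℝ) (z : Site d) : Dl f (-z) = Dl f z := by
  unfold Dl
  rw [← Equiv.tsum_eq (Equiv.addRight z) (fun x => (f (x + -z) - f x) ^ 2)]
  refine tsum_congr fun x => ?_
  simp only [Equiv.coe_addRight, add_neg_cancel_right]; ring

lemma Dl_nonneg {d : ℕ} (f : Site d → ℝ) (z : Site d) : 0 ≤ Dl f z := tsum_nonneg fun _ => sq_nonneg _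

lemma Dl_shift {d : ℕ} {A : Set (Site d)} (hA : A.Finite) {f : Site d → ℝ} (hf : ∀ x, x ∉ A → f x = 0) (z w : Site d) :
    HasSum (fun x => (f (x + w + z) - f (x + w)) ^ 2) (Dl f z) := by
  have h : HasSum (fun x => (f (x + z) - f x) ^ 2) (Dl f z) := (Dl_summable hA hf z).hasSum
  exact (Equiv.hasSum_iff (Equiv.addRight w) (f := fun x => (f (x + z) - f x) ^ 2)).mpr h

lemma Dl_nsmul {d : ℕ} {A : Set (Site d)} (hA : A.Finite) {f : Site d → ℝ} (hf : ∀ x, x ∉ A → f x = 0) (z : Site d) (k : ℕ) :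
    Dl f ((k : ℤ) • z) ≤ (k : ℝ) ^ 2 * Dl f z := by
  have hs : ∀ j : ℕ, Summable fun x => (f (x + ((j:ℤ) • z) + z) - f (x + (j:ℤ) • z)) ^ 2 := fun j =>
    (Dl_shift hA hf z ((j:ℤ) • z)).summable
  have he : ∀ j : ℕ, ∑' x, (f (x + ((j:ℤ) • z) + z) - f (x + (j:ℤ) • z)) ^ 2 = Dl f z := fun j =>
    (Dl_shift hA hf z ((j:ℤ) • z)).tsum_eq
  have hp : ∀ x, (f (x + (k:ℤ) • z) - f x) ^ 2 ≤ k * ∑ j ∈ Finset.range k, (f (x + ((j:ℤ) • z) + z) - f (x + (j:ℤ) • z)) ^ 2 := by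
    intro x
    have e : f (x + (k:ℤ) • z) - f x = ∑ j ∈ Finset.range k, (f (x + ((j:ℤ) • z) + z) - f (x + (j:ℤ) • z)) := by
      have := Finset.sum_range_sub (fun j : ℕ => f (x + (j:ℤ) • z)) k
      simp only [Nat.cast_zero, zero_smul, add_zero, Nat.cast_add, Nat.cast_one, add_smul, one_smul, ← add_assoc] at this
      exact this.symm
    rw [e]
    simpa using sq_sum_le_card_mul_sum_sq (s := Finset.range k) (f := fun j : ℕ => (f (x + ((j:ℤ) • z) + z) - f (x + (j:ℤ) • z)))
  have hS := summable_sum (s := Finset.range k) fun j _ => hs j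
  calc Dl f ((k : ℤ) • z) ≤ ∑' x, (k:ℝ) * ∑ j ∈ Finset.range k, (f (x + ((j:ℤ) • z) + z) - f (x + (j:ℤ) • z)) ^ 2 :=
        (Dl_summable hA hf _).tsum_le_tsum hp (hS.mul_left _)
    _ = _ := by
        rw [tsum_mul_left, Summable.tsum_finsetSum fun j _ => hs j, Finset.sum_congr rfl fun j _ => he j]
        simp; ring

lemma Dl_zsmul {d : ℕ} {A : Set (Site d)} (hA : A.Finite) {f : Site d → ℝ} (hf : ∀ x, x ∉ A → f x = 0) (z : Site d) (k : ℤ) :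
    Dl f (k • z) ≤ (k : ℝ) ^ 2 * Dl f z := by
  obtain ⟨n, rfl | rfl⟩ := Int.eq_nat_or_neg k
  · exact_mod_cast Dl_nsmul hA hf z n
  · rw [neg_smul, Dl_neg]
    refine (Dl_nsmul hA hf z n).trans (le_of_eq ?_)
    push_cast; ring

lemma DF_fl {d : ℕ} {A : Set (Site d)} (hA : A.Finite) {f : Site d → ℝ} (hf : ∀ x, x ∉ A → f x = 0)
    {L M : ℝ} (h : Bd (d := d) L M (fun x => f (fl x))) (i : Fin d) (y : Vd d) :
    DF (fun x => f (fl x)) (Pc {i} y) ≤ ((y i) ^ 2 + 1) * Dl f (unitVec d i) := by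
  have hi := sq_int h (Pc {i} y) 0
  simp only [add_zero] at hi
  have e : DF (fun x => f (fl x)) (Pc {i} y) = (1 - Int.fract (y i)) * Dl f (⌊y i⌋ • unitVec d i)
      + Int.fract (y i) * Dl f ((⌊y i⌋ + 1) • unitVec d i) := by
    unfold DF
    rw [← (tile hi).tsum_eq]
    simp only [fl_cell]
    rw [((Dl_summable hA hf _).mul_left _).tsum_add ((Dl_summable hA hf _).mul_left _), tsum_mul_left, tsum_mul_left]
    rfl
  rw [e]
  have hθ0 : 0 ≤ Int.fract (y i) := Int.fract_nonneg _
  have hθ1 : Int.fract (y i) < 1 := Int.fract_lt_one _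
  have h1 := mul_le_mul_of_nonneg_left (Dl_zsmul hA hf (unitVec d i) ⌊y i⌋) (by linarith : 0 ≤ 1 - Int.fract (y i))
  have h2 := mul_le_mul_of_nonneg_left (Dl_zsmul hA hf (unitVec d i) (⌊y i⌋ + 1)) hθ0
  have h3 : (1 - Int.fract (y i)) * (⌊y i⌋ : ℝ) ^ 2 + Int.fract (y i) * ((⌊y i⌋ + 1 : ℤ) : ℝ) ^ 2 ≤ (y i) ^ 2 + 1 := by
    push_cast
    have : y i = ⌊y i⌋ + Int.fract (y i) := (Int.floor_add_fract _).symm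
    set a : ℝ := (⌊y i⌋ : ℝ)
    set b := Int.fract (y i)
    rw [this]
    nlinarith
  have h4 := mul_le_mul_of_nonneg_right h3 (Dl_nonneg f (unitVec d i))
  linarith

/-- The key comparison lemma. -/
lemma key_energy {d : ℕ} (hd : 1 ≤ d) {A : Set (Site d)} (hA : A.Finite) {f : Site d → ℝ} (h0 : ∀ x, 0 ≤ f x)
    (hf : ∀ x, x ∉ A → f x = 0) {k : ℝ} (hk0 : 0 ≤ k) (hk : (A.ncard : ℝ) ≤ k) {ρ : ℝ} (hρ : 0 < ρ) :
    (∑' x, f x) ^ 2 ≤ tauf d (radius d k + ρ) * (1 + (d + 2) / ρ ^ 2) * ((1 / (2 * (d : ℝ))) * ∑ i, Dl f (unitVec d i)) := by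
  have hω := ballVol_pos d
  have hd0 : (0:ℝ) < d := by exact_mod_cast hd
  have hR := radius_nonneg d hk0
  obtain ⟨L, M, hRL, hadm⟩ := fl_bd hA h0 hf (radius d k)
  have hbd := hadm.bd
  have hball : ∀ r : ℝ, 0 ≤ r → volume.real (Metric.ball (0 : Vd d) r) = ballVol d * r ^ d := by
    intro r hr
    have : Nonempty (Fin d) := ⟨⟨0, hd⟩⟩
    rw [measureReal_def, Measure.addHaar_ball _ _ hr, ENNReal.toReal_mul, ENNReal.toReal_ofReal (by positivity)]
    simp only [finrank_euclideanSpace, Fintype.card_fin, ballVol]; ring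
  have hU : volume.real (Uset (fun x : Vd d => f (fl x))) ≤ volume.real (Metric.ball (0 : Vd d) (radius d k)) := by
    rw [hball _ hR, radius_pow hd hk0]
    exact (fl_Uset hA hf).trans hk
  have low := energy_lower hd hρ hR hRL hadm hU
  rw [fl_int hadm.integrable] at low
  have icut : Integrable (fun y : Vd d => cut ρ y) := by
    have := cut_integrable (d := d) ρ (g := fun _ => 1) measurable_const 1 (by norm_num) (by simp)
    simpa [cut] using this
  have vcut : ∫ y : Vd d, cut ρ y = ballVol d * ρ ^ d := by
    rw [← hball ρ hρ.le, ← ind_integral measurableSet_ball]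
    congr 1; funext y
    rw [ind_if (Metric.ball (0 : Vd d) ρ) (‖y‖ < ρ) y (by rw [mem_ball_zero_iff])]
    rfl
  have up : EnB ρ (fun x : Vd d => f (fl x)) (fun x => f (fl x)) ≤ (Jc d ρ / d + ballVol d * ρ ^ d) * ∑ i, Dl f (unitVec d i) := by
    refine (EnB_le hρ hbd).trans ?_
    rw [Finset.mul_sum]
    refine Finset.sum_le_sum fun i _ => ?_
    have hc := cut_coord_sq hd ρ i
    have : (Jc d ρ / d + ballVol d * ρ ^ d) * Dl f (unitVec d i) =
        ∫ y : Vd d, (cut ρ y * (y i) ^ 2 + cut ρ y) * Dl f (unitVec d i) := by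
      rw [integral_mul_const, integral_add hc.1 icut, hc.2, vcut]
    rw [this]
    refine integral_mono (cutDF_int ρ hbd {i}) ((hc.1.add icut).mul_const _) fun y => ?_
    have hc0 : 0 ≤ cut ρ y := by unfold cut; split_ifs <;> norm_num
    have := mul_le_mul_of_nonneg_left (DF_fl hA hf hbd i y) hc0
    simp only [Pi.add_apply]
    linarith
  have hτ : 0 ≤ tauf d (radius d k + ρ) := by unfold tauf; positivity
  have h1 := low.trans (mul_le_mul_of_nonneg_left up hτ)
  have hJ := Jc_eq hd hρ
  have hJ0 : 0 < Jc d ρ := by rw [hJ]; positivity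
  have e : tauf d (radius d k + ρ) * ((Jc d ρ / d + ballVol d * ρ ^ d) * ∑ i, Dl f (unitVec d i)) =
      (2 * Jc d ρ) * (tauf d (radius d k + ρ) * (1 + (d + 2) / ρ ^ 2) * ((1 / (2 * (d : ℝ))) * ∑ i, Dl f (unitVec d i))) := by
    have : Jc d ρ / d + ballVol d * ρ ^ d = (2 * Jc d ρ) * ((1 + (d + 2) / ρ ^ 2) * (1 / (2 * (d:ℝ)))) := by
      rw [hJ]; field_simp; ring
    rw [this]; ring
  rw [e] at h1
  exact le_of_mul_le_mul_left h1 (by positivity)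



/-! ### Part 8: the summation step -/

def tauK (d : ℕ) (ρ : ℝ) (k : ℝ) : ℝ := tauf d (radius d k + ρ) * (1 + (d + 2) / ρ ^ 2)

lemma tauK_nonneg (d : ℕ) {ρ k : ℝ} (hρ : 0 < ρ) (hk : 0 ≤ k) : 0 ≤ tauK d ρ k := by
  have hω := ballVol_pos d
  have hR := radius_nonneg d hk
  unfold tauK tauf
  positivity

lemma trunc_le {d : ℕ} (hd : 1 ≤ d) {A : Set (Site d)} (hA : A.Finite) {e : Site d → ℝ}
    (he : IsExitFun d A e) {t : ℝ} (ht : 0 ≤ t) {k : ℕ} (hk : {x | t < e x}.ncard ≤ k) {ρ : ℝ} (hρ : 0 < ρ) :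
    ∑' x, max (e x - t) 0 ≤ tauK d ρ k := by
  have hsub : {x | t < e x} ⊆ A := fun x hx => by
    by_contra h
    have hx' : t < e x := hx
    rw [he.1 x h] at hx'; linarith
  have hfin := hA.subset hsub
  have h0 : ∀ x, 0 ≤ max (e x - t) 0 := fun x => le_max_right _ _
  have hf : ∀ x, x ∉ {x | t < e x} → max (e x - t) 0 = 0 := by
    intro x hx
    have : e x ≤ t := not_lt.mp hx
    exact max_eq_right (by linarith)
  have h1 := key_energy hd hfin h0 hf (k := (k:ℝ)) (by positivity) (by exact_mod_cast hk) hρ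
  have h2 := trunc_energy hd hA he ht
  have hτ := tauK_nonneg d hρ (k := (k:ℝ)) (by positivity)
  have hS : 0 ≤ ∑' x, max (e x - t) 0 := tsum_nonneg h0
  rcases hS.eq_or_lt with hS | hS
  · rw [← hS]; exact hτ
  · have h3 : (∑' x, max (e x - t) 0) ^ 2 ≤ tauK d ρ k * ∑' x, max (e x - t) 0 :=
      h1.trans (mul_le_mul_of_nonneg_left h2 hτ)
    rw [sq] at h3
    exact le_of_mul_le_mul_right h3 hS

lemma lp_step {α : Type*} {A : Set α} (hA : A.Finite) {e : α → ℝ} (he : ∀ x, x ∉ A → e x = 0) (τ : ℕ → ℝ)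
    (hτ0 : ∀ k, 0 ≤ τ k) (hτ : ∀ k, 1 ≤ k → ∀ t, 0 ≤ t → {x | t < e x}.ncard ≤ k → ∑' x, max (e x - t) 0 ≤ τ k)
    (x₀ : α) (k : ℕ) (hk : 1 ≤ k) : ∀ t, 0 ≤ t → {x | t < e x}.ncard ≤ k →
      e x₀ - t ≤ (∑' x, max (e x - t) 0) / k + ∑ j ∈ Finset.Ico 1 k, τ j / (j * (j + 1)) := by
  have hsub : ∀ t, 0 ≤ t → {x | t < e x} ⊆ A := fun t ht x hx => by
    by_contra h
    have hx' : t < e x := hx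
    rw [he x h] at hx'; linarith
  have hfin : ∀ t, 0 ≤ t → {x | t < e x}.Finite := fun t ht => hA.subset (hsub t ht)
  have hsum : ∀ t, 0 ≤ t → Summable fun x => max (e x - t) 0 := by
    intro t ht
    refine summable_of_hasFiniteSupport (hA.subset fun x hx => ?_)
    by_contra h
    apply hx
    simp [he x h, ht]
  have hS0 : ∀ t, 0 ≤ ∑' x, max (e x - t) 0 := fun t => tsum_nonneg fun x => le_max_right _ _
  -- one level up
  have level : ∀ t, 0 ≤ t → {x | t < e x}.Nonempty → ∃ t', t < t' ∧
      {x | t' < e x}.ncard < {x | t < e x}.ncard ∧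
      (∑' x, max (e x - t) 0) = (∑' x, max (e x - t') 0) + {x | t < e x}.ncard * (t' - t) := by
    intro t ht hne
    obtain ⟨z, hz, hmin⟩ := Set.exists_min_image _ e (hfin t ht) hne
    have hz' : t < e z := hz
    refine ⟨e z, hz', ?_, ?_⟩
    · refine Set.ncard_lt_ncard ⟨fun x hx => lt_trans hz' hx, fun h => ?_⟩ (hfin t ht)
      have := h hz
      exact lt_irrefl _ (show e z < e z from this)
    · set s := (hfin t ht).toFinset with hs
      have h1 : ∀ u, t ≤ u → ∑' x, max (e x - u) 0 = ∑ x ∈ s, max (e x - u) 0 := by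
        intro u hu
        refine tsum_eq_sum fun x hx => ?_
        have : e x ≤ t := by
          simpa [hs] using hx
        exact max_eq_right (by linarith)
      rw [h1 t le_rfl, h1 (e z) hz'.le, Set.ncard_eq_toFinset_card _ (hfin t ht), ← hs, ← nsmul_eq_mul,
        ← Finset.sum_const, ← Finset.sum_add_distrib]
      refine Finset.sum_congr rfl fun x hx => ?_
      have hx1 : t < e x := by simpa [hs] using hx
      have hx2 : e z ≤ e x := hmin x hx1
      rw [max_eq_left (by linarith), max_eq_left (by linarith)]; ring
  have empty : ∀ t, 0 ≤ t → ¬ {x | t < e x}.Nonempty → e x₀ - t ≤ 0 := by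
    intro t ht hne
    by_contra h
    exact hne ⟨x₀, by show t < e x₀; linarith⟩
  induction k, hk using Nat.le_induction with
  | base =>
    intro t ht hc
    simp only [Finset.Ico_self, Finset.sum_empty, Nat.cast_one, div_one, add_zero]
    by_cases hne : {x | t < e x}.Nonempty
    · obtain ⟨t', htt, hcard, hS⟩ := level t ht hne
      have h1 : {x | t < e x}.ncard = 1 := by
        have := (Set.ncard_pos (hfin t ht)).mpr hne
        omega
      have h2 : {x | t' < e x}.ncard = 0 := by omega
      have h3 : ¬ {x | t' < e x}.Nonempty := by
        rw [Set.ncard_eq_zero (hfin t' (by linarith))] at h2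
        rw [h2]; simp
      have := empty t' (by linarith) h3
      rw [hS, h1]
      push_cast
      linarith [hS0 t']
    · exact (empty t ht hne).trans (hS0 t)
  | succ k hk ih =>
    intro t ht hc
    have hk0 : (0:ℝ) < k := by exact_mod_cast hk
    rw [Finset.sum_Ico_succ_top hk]
    push_cast
    have split : ∀ s : ℝ, s ≤ τ k → s / k ≤ s / (k + 1) + τ k / (k * (k + 1)) := by
      intro s hs
      have : s / k = s / (k + 1) + s / (k * (k + 1)) := by field_simp
      rw [this]
      gcongr
    by_cases hlt : {x | t < e x}.ncard ≤ k
    · have h1 := ih t ht hlt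
      have h2 := split _ (hτ k hk t ht hlt)
      linarith
    · have hck : {x | t < e x}.ncard = k + 1 := by omega
      have hne : {x | t < e x}.Nonempty := by
        rw [← Set.ncard_pos (hfin t ht)]; omega
      obtain ⟨t', htt, hcard, hS⟩ := level t ht hne
      have ht' : 0 ≤ t' := by linarith
      have h1 := ih t' ht' (by omega)
      have h2 := split _ (hτ k hk t' ht' (by omega))
      rw [hck] at hS
      push_cast at hS
      have h3 : (∑' x, max (e x - t) 0) / (k + 1) = (∑' x, max (e x - t') 0) / (k + 1) + (t' - t) := by
        rw [hS]; field_simp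
      linarith

lemma exit_le {d : ℕ} (hd : 1 ≤ d) {A : Set (Site d)} (hA : A.Finite) {n : ℕ} (hn : 1 ≤ n) (hc : A.ncard = n)
    (ρ : ℕ → ℝ) (hρ : ∀ k, 0 < ρ k) (x : Site d) :
    exitFun d A x ≤ tauK d (ρ n) n / n + ∑ j ∈ Finset.Ico 1 n, tauK d (ρ j) j / (j * (j + 1)) := by
  have he := exitFun_spec hd hA
  have hcard : {x | 0 < exitFun d A x}.ncard ≤ n := by
    rw [← hc]
    refine Set.ncard_le_ncard (fun x hx => ?_) hA
    by_contra h
    have hx' : 0 < exitFun d A x := hx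
    rw [he.1 x h] at hx'; exact lt_irrefl _ hx'
  have := lp_step hA he.1 (fun k => tauK d (ρ k) k) (fun k => tauK_nonneg d (hρ k) (by positivity))
    (fun k _ t ht hk => trunc_le hd hA he ht hk (hρ k)) x n hn 0 le_rfl hcard
  have h2 := trunc_le hd hA he (le_refl (0:ℝ)) hcard (hρ n)
  rw [sub_zero] at this
  refine this.trans ?_
  gcongr



/-! ### Part 9: asymptotics -/

lemma pow_lin (c : ℝ) (hc : 0 ≤ c) (N : ℕ) : ∃ K, 0 ≤ K ∧ ∀ u, 0 ≤ u → u ≤ 1 → (1 + c * u) ^ N ≤ 1 + K * u := by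
  induction N with
  | zero => exact ⟨0, le_rfl, fun u _ _ => by simp⟩
  | succ N ih =>
    obtain ⟨K, hK, h⟩ := ih
    refine ⟨K + c + K * c, by positivity, fun u hu hu1 => ?_⟩
    rw [pow_succ]
    have h1 := mul_le_mul_of_nonneg_right (h u hu hu1) (by positivity : 0 ≤ 1 + c * u)
    have h2 : K * c * (u * u) ≤ K * c * u := mul_le_mul_of_nonneg_left (by nlinarith) (by positivity)
    nlinarith

lemma sum_rpow {β : ℝ} (h0 : 0 < β) (h1 : β ≤ 1) (m : ℕ) :
    ∑ j ∈ Finset.Ico 1 (m + 1), (j : ℝ) ^ (β - 1) ≤ (m : ℝ) ^ β / β := by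
  induction m with
  | zero => simp [h0.ne']
  | succ m ih =>
    rw [Finset.sum_Ico_succ_top (by omega)]
    have hj : (0:ℝ) < ((m + 1 : ℕ) : ℝ) := by positivity
    have hb := rpow_one_add_le_one_add_mul_self (s := -1 / ((m + 1 : ℕ) : ℝ)) (p := β) (by
      rw [le_div_iff₀ hj]; push_cast; linarith [Nat.cast_nonneg (α := ℝ) m]) h0.le h1
    have e1 : 1 + -1 / ((m + 1 : ℕ) : ℝ) = m / ((m + 1 : ℕ) : ℝ) := by field_simp; push_cast; ring
    rw [e1, Real.div_rpow (by positivity) (by positivity)] at hb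
    have hp : 0 < ((m + 1 : ℕ) : ℝ) ^ β := Real.rpow_pos_of_pos hj _
    rw [div_le_iff₀ hp] at hb
    have e2 : ((m + 1 : ℕ) : ℝ) ^ (β - 1) = ((m + 1 : ℕ) : ℝ) ^ β / ((m + 1 : ℕ) : ℝ) := by
      rw [Real.rpow_sub hj, Real.rpow_one]
    rw [e2]
    have e3 : (1 + β * (-1 / ((m + 1 : ℕ) : ℝ))) * ((m + 1 : ℕ) : ℝ) ^ β
      = ((m + 1 : ℕ) : ℝ) ^ β - β * (((m + 1 : ℕ) : ℝ) ^ β / ((m + 1 : ℕ) : ℝ)) := by ring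
    rw [e3] at hb
    have h3 : (m : ℝ) ^ β / β ≤ (((m + 1 : ℕ) : ℝ) ^ β - β * (((m + 1 : ℕ) : ℝ) ^ β / ((m + 1 : ℕ) : ℝ))) / β := by gcongr
    rw [sub_div, mul_div_cancel_left₀ _ h0.ne'] at h3
    linarith

lemma radius_eq (d : ℕ) {k : ℝ} (hk : 0 ≤ k) : radius d k = radius d 1 * k ^ (1 / (d:ℝ)) := by
  unfold radius
  rw [div_eq_mul_one_div, Real.mul_rpow hk (by have := ballVol_pos d; positivity), mul_comm]

lemma radius_one_pos (d : ℕ) : 0 < radius d 1 := by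
  have := ballVol_pos d
  unfold radius
  positivity

lemma tauK_bound {d : ℕ} (hd : 1 ≤ d) : ∃ K, 0 ≤ K ∧ ∀ k : ℕ, 1 ≤ k →
    tauK d ((k:ℝ) ^ (1 / (3 * (d:ℝ)))) k ≤ 2 * radius d 1 ^ 2 / (d + 2) *
      (k * (k:ℝ) ^ (2 / (d:ℝ)) + K * (k * (k:ℝ) ^ (4 / (3 * (d:ℝ))))) := by
  have hd0 : (0:ℝ) < d := by exact_mod_cast hd
  set r := radius d 1 with hr
  have hr0 : 0 < r := radius_one_pos d
  obtain ⟨K1, hK1, h1⟩ := pow_lin (1 / r) (by positivity) (d + 2)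
  refine ⟨K1 + (d + 2) + K1 * (d + 2), by positivity, fun k hk => ?_⟩
  have hk0 : (0:ℝ) < k := by exact_mod_cast hk
  have hk1 : (1:ℝ) ≤ k := by exact_mod_cast hk
  set s := (k:ℝ) ^ (1 / (3 * (d:ℝ))) with hs
  have hs1 : 1 ≤ s := Real.one_le_rpow hk1 (by positivity)
  have hs0 : 0 < s := by linarith
  have hspow : ∀ m : ℕ, s ^ m = (k:ℝ) ^ ((m:ℝ) / (3 * (d:ℝ))) := by
    intro m
    rw [hs, ← Real.rpow_natCast, ← Real.rpow_mul hk0.le]; congr 1; ring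
  have hR : radius d k = r * s ^ 3 := by
    rw [radius_eq d hk0.le, hspow]; congr 2; push_cast; field_simp
  have hωr : ballVol d * r ^ d = 1 := radius_pow hd zero_le_one
  have e3d : s ^ (3 * d) = k := by
    rw [hspow]; push_cast; rw [div_self (by positivity), Real.rpow_one]
  have e6 : s ^ 6 = (k:ℝ) ^ (2 / (d:ℝ)) := by
    rw [hspow]; congr 1; push_cast; field_simp; norm_num
  have e4 : s ^ 4 = (k:ℝ) ^ (4 / (3 * (d:ℝ))) := by
    rw [hspow]; congr 1
  rw [← e6, ← e4]
  set u := 1 / s ^ 2 with hu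
  have hu0 : 0 ≤ u := by positivity
  have hu1 : u ≤ 1 := by
    rw [hu, div_le_one (by positivity)]; exact one_le_pow₀ hs1
  have hfac : tauK d s k = 2 * r ^ 2 / (d + 2) * (k * s ^ 6) * ((1 + 1 / r * u) ^ (d + 2) * (1 + (d + 2) * u)) := by
    unfold tauK tauf
    have a1 : radius d k + s = (r * s ^ 3) * (1 + 1 / r * u) := by
      rw [hR, hu]; field_simp
    have a2 : ballVol d * (r * s ^ 3) ^ (d + 2) = r ^ 2 * (k * s ^ 6) := by
      calc ballVol d * (r * s ^ 3) ^ (d + 2) = (ballVol d * r ^ d) * r ^ 2 * (s ^ (3 * d) * s ^ 6) := by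
            rw [mul_pow, pow_add, ← pow_mul, mul_add, pow_add]; ring
        _ = _ := by rw [hωr, e3d]; ring
    rw [a1, mul_pow]
    calc 2 * ballVol d / (d + 2) * ((r * s ^ 3) ^ (d + 2) * (1 + 1 / r * u) ^ (d + 2)) * (1 + (d + 2) / s ^ 2)
        = 2 / (d + 2) * (ballVol d * (r * s ^ 3) ^ (d + 2)) * (1 + 1 / r * u) ^ (d + 2) * (1 + (d + 2) / s ^ 2) := by ring
      _ = _ := by rw [a2, hu]; ring
  rw [hfac, mul_assoc]
  refine mul_le_mul_of_nonneg_left ?_ (by positivity)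
  have h2 : (1 + 1 / r * u) ^ (d + 2) * (1 + (d + 2) * u) ≤ 1 + (K1 + (d + 2) + K1 * (d + 2)) * u := by
    have h3 := mul_le_mul_of_nonneg_right (h1 u hu0 hu1) (by positivity : 0 ≤ 1 + ((d:ℝ) + 2) * u)
    have h4 : K1 * ((d:ℝ) + 2) * (u * u) ≤ K1 * (d + 2) * u := mul_le_mul_of_nonneg_left (by nlinarith) (by positivity)
    nlinarith
  have h5 := mul_le_mul_of_nonneg_left h2 (by positivity : 0 ≤ (k:ℝ) * s ^ 6)
  refine h5.trans (le_of_eq ?_)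
  have : s ^ 6 * u = s ^ 4 := by rw [hu]; field_simp
  rw [← this]; ring

lemma exit_asym {d : ℕ} (hd : 2 ≤ d) : ∃ C, 0 ≤ C ∧ ∀ n : ℕ, 1 ≤ n → ∀ A : Set (Site d), A.Finite → A.ncard = n →
    ∀ x, exitFun d A x ≤ radius d n ^ 2 + C * (n:ℝ) ^ (4 / (3 * (d:ℝ))) := by
  have hd1 : 1 ≤ d := by omega
  have hd2 : (2:ℝ) ≤ d := by exact_mod_cast hd
  have hd0 : (0:ℝ) < d := by linarith
  obtain ⟨K, hK, hb⟩ := tauK_bound hd1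
  set r := radius d 1 with hr
  have hr0 : 0 < r := radius_one_pos d
  set a := 2 * r ^ 2 / ((d:ℝ) + 2) with ha
  have ha0 : 0 ≤ a := by positivity
  set β := 2 / (d:ℝ) with hβ
  set β' := 4 / (3 * (d:ℝ)) with hβ'
  have hβ0 : 0 < β := by positivity
  have hβ'0 : 0 < β' := by positivity
  have hβ1 : β ≤ 1 := by rw [hβ, div_le_one hd0]; exact hd2
  have hβ'1 : β' ≤ 1 := by rw [hβ', div_le_one (by positivity)]; linarith
  refine ⟨a * K * (1 + 1 / β'), by positivity, fun n hn A hA hc x => ?_⟩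
  have hn0 : (0:ℝ) < n := by exact_mod_cast hn
  have h := exit_le hd1 hA hn hc (fun k => if k = 0 then 1 else (k:ℝ) ^ (1 / (3 * (d:ℝ)))) (fun k => by
    split_ifs with hk
    · exact one_pos
    · have : (0:ℝ) < k := by exact_mod_cast Nat.pos_of_ne_zero hk
      positivity) x
  have t1 : tauK d (if n = 0 then 1 else (n:ℝ) ^ (1 / (3 * (d:ℝ)))) n / n ≤ a * ((n:ℝ) ^ β + K * (n:ℝ) ^ β') := by
    rw [if_neg (by omega), div_le_iff₀ hn0]
    refine (hb n hn).trans (le_of_eq ?_)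
    ring
  have t2 : ∑ j ∈ Finset.Ico 1 n, tauK d (if j = 0 then 1 else (j:ℝ) ^ (1 / (3 * (d:ℝ)))) j / (j * (j + 1)) ≤
      ∑ j ∈ Finset.Ico 1 n, a * ((j:ℝ) ^ (β - 1) + K * (j:ℝ) ^ (β' - 1)) := by
    refine Finset.sum_le_sum fun j hj => ?_
    have hj1 : 1 ≤ j := (Finset.mem_Ico.mp hj).1
    have hj0 : (0:ℝ) < j := by exact_mod_cast hj1
    rw [if_neg (by omega), Real.rpow_sub hj0, Real.rpow_sub hj0, Real.rpow_one, div_le_iff₀ (by positivity)]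
    refine (hb j hj1).trans ?_
    have e : a * ((j:ℝ) ^ β / j + K * ((j:ℝ) ^ β' / j)) * (j * (j + 1)) = a * (((j:ℝ) ^ β + K * (j:ℝ) ^ β') * (j + 1)) := by
      field_simp
    rw [e]
    refine mul_le_mul_of_nonneg_left ?_ ha0
    have : 0 ≤ (j:ℝ) ^ β + K * (j:ℝ) ^ β' := by positivity
    linarith
  obtain ⟨m, rfl⟩ : ∃ m, n = m + 1 := ⟨n - 1, by omega⟩
  have t3 : ∑ j ∈ Finset.Ico 1 (m + 1), a * ((j:ℝ) ^ (β - 1) + K * (j:ℝ) ^ (β' - 1)) ≤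
      a * (((m + 1 : ℕ) : ℝ) ^ β / β + K * (((m + 1 : ℕ) : ℝ) ^ β' / β')) := by
    rw [← Finset.mul_sum, Finset.sum_add_distrib, ← Finset.mul_sum]
    have hmono : ∀ b : ℝ, 0 < b → (m:ℝ) ^ b / b ≤ ((m + 1 : ℕ) : ℝ) ^ b / b := by
      intro b hb
      have : (m:ℝ) ^ b ≤ ((m + 1 : ℕ) : ℝ) ^ b := Real.rpow_le_rpow (by positivity) (by push_cast; linarith) hb.le
      gcongr
    have := (sum_rpow hβ0 hβ1 m).trans (hmono _ hβ0)
    have := (sum_rpow hβ'0 hβ'1 m).trans (hmono _ hβ'0)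
    gcongr
  refine h.trans ((add_le_add t1 (t2.trans t3)).trans (le_of_eq ?_))
  have hR : radius d ((m + 1 : ℕ) : ℝ) ^ 2 = r ^ 2 * ((m + 1 : ℕ) : ℝ) ^ β := by
    rw [radius_eq d hn0.le, mul_pow, ← Real.rpow_natCast (_ ^ (1 / (d:ℝ))), ← Real.rpow_mul hn0.le]
    congr 2; rw [hβ]; push_cast; ring
  have har : a * (1 + 1 / β) = r ^ 2 := by rw [ha, hβ]; field_simp; ring
  rw [hR, ← har]
  ring

lemma gam_le {d : ℕ} (hd : 2 ≤ d) : 4 / (3 * (d:ℝ)) ≤ 2 / (d:ℝ) - gam d := by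
  have hd2 : (2:ℝ) ≤ d := by exact_mod_cast hd
  have key : gam d ≤ 2 / (3 * (d:ℝ)) := by
    unfold gam
    rw [if_neg (by omega)]
    split_ifs with h
    · subst h; norm_num
    · have hlog : 1 / 2 ≤ Real.log 3 := by
        have h1 := Real.log_two_gt_d9
        have h2 : Real.log 2 ≤ Real.log 3 := Real.log_le_log (by norm_num) (by norm_num)
        linarith
      have h2 : (2:ℝ) ^ (-(d:ℝ)) ≤ 1 := Real.rpow_le_one_of_one_le_of_nonpos (by norm_num) (by linarith)
      rw [div_le_div_iff₀ (by positivity) (by positivity)]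
      have h3 : (2:ℝ) ^ (-(d:ℝ)) * (3 * d) ≤ 1 * (3 * d) := by gcongr
      have h4 : 2 * (2 * (d:ℝ) ^ 2 * (1 / 2)) ≤ 2 * (2 * (d:ℝ) ^ 2 * Real.log 3) := by gcongr
      nlinarith
  have : 2 / (d:ℝ) - 2 / (3 * (d:ℝ)) = 4 / (3 * (d:ℝ)) := by field_simp; norm_num
  linarith

lemma exit_one {A : Set (Site 1)} (hA : A.Finite) (x : Site 1) : exitFun 1 A x ≤ ((A.ncard + 1 : ℝ) / 2) ^ 2 := by
  have he := exitFun_spec le_rfl hA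
  by_cases hx : x ∈ A
  swap
  · rw [he.1 x hx]; positivity
  set c : ℤ → Site 1 := fun z _ => z with hc
  have hcx : ∀ y : Site 1, c (y 0) = y := by intro y; funext j; rw [Subsingleton.elim j 0]
  have hinj : Function.Injective c := fun a b h => congrFun h 0
  have hZ : (c ⁻¹' A).Finite := hA.preimage hinj.injOn
  obtain ⟨lo, hlo⟩ := hZ.bddBelow
  obtain ⟨hi, hhi⟩ := hZ.bddAbove
  have hxZ : x 0 ∈ c ⁻¹' A := by show c (x 0) ∈ A; rw [hcx]; exact hx
  have hlox := hlo hxZ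
  have hhix := hhi hxZ
  obtain ⟨a, ⟨ha1, ha2⟩, hamax⟩ := Int.exists_greatest_of_bdd (P := fun z => z < x 0 ∧ c z ∉ A) ⟨x 0, fun z hz => hz.1.le⟩
    ⟨lo - 1, by omega, fun h => by have := hlo (show lo - 1 ∈ c ⁻¹' A from h); omega⟩
  obtain ⟨b, ⟨hb1, hb2⟩, hbmin⟩ := Int.exists_least_of_bdd (P := fun z => x 0 < z ∧ c z ∉ A) ⟨x 0, fun z hz => hz.1.le⟩
    ⟨hi + 1, by omega, fun h => by have := hhi (show hi + 1 ∈ c ⁻¹' A from h); omega⟩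
  have hin : ∀ z, a < z → z < b → c z ∈ A := by
    intro z hz1 hz2
    by_contra h
    rcases lt_trichotomy z (x 0) with h1 | h1 | h1
    · have := hamax z ⟨h1, h⟩; omega
    · rw [h1, hcx] at h; exact h hx
    · have := hbmin z ⟨h1, h⟩; omega
  set B : Set (Site 1) := {y | a < y 0 ∧ y 0 < b} with hB
  have hBA : B ⊆ A := fun y hy => by have := hin (y 0) hy.1 hy.2; rwa [hcx] at this
  have hcard : ((b - a - 1).toNat : ℕ) ≤ A.ncard := by
    have h1 : c '' (Set.Ioo a b) ⊆ A := by
      rintro _ ⟨z, hz, rfl⟩; exact hin z hz.1 hz.2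
    have h2 := Set.ncard_le_ncard h1 hA
    rw [Set.ncard_image_of_injective _ hinj] at h2
    have h3 : (Set.Ioo a b).ncard = (b - a - 1).toNat := by
      rw [← Finset.coe_Ioo, Set.ncard_coe_finset, Int.card_Ioo]
    omega
  have hcardR : (b:ℝ) - a - 1 ≤ A.ncard := by
    have : b - a - 1 ≤ (A.ncard : ℤ) := by omega
    exact_mod_cast this
  set g : Site 1 → ℝ := fun y => ((y 0 : ℝ) - a) * (b - y 0) - exitFun 1 A y with hg
  have hga : ∀ y : Site 1, y 0 = a → g y = 0 := by
    intro y hy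
    have : exitFun 1 A y = 0 := he.1 y (by rw [← hcx y, hy]; exact ha2)
    simp only [hg, this, hy]; ring
  have hgb : ∀ y : Site 1, y 0 = b → g y = 0 := by
    intro y hy
    have : exitFun 1 A y = 0 := he.1 y (by rw [← hcx y, hy]; exact hb2)
    simp only [hg, this, hy]; ring
  have hmin := min_principle le_rfl (hA.subset hBA) (fun y => if y ∈ B then g y else 0) (by
    intro y hy
    have hE := he.2 y (hBA hy)
    have hnb : ∀ z : Site 1, a ≤ z 0 → z 0 ≤ b → (if z ∈ B then g z else 0) = g z := by
      intro z h1 h2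
      split_ifs with h
      · rfl
      · by_cases h3 : z 0 = a
        · exact (hga z h3).symm
        · have : z 0 = b := by
            by_contra h4; exact h ⟨lt_of_le_of_ne h1 (Ne.symm h3), lt_of_le_of_ne h2 h4⟩
          exact (hgb z this).symm
    have hy1 : a < y 0 := hy.1
    have hy2 : y 0 < b := hy.2
    have hu : ∀ i : Fin 1, unitVec 1 i 0 = 1 := by intro i; simp [unitVec, Subsingleton.elim i 0]
    unfold lap
    simp only [Fin.sum_univ_one] at hE ⊢
    rw [hnb (y + unitVec 1 0) (by simp [hu]; omega) (by simp [hu]; omega),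
      hnb (y - unitVec 1 0) (by simp [hu]; omega) (by simp [hu]; omega), hnb y hy1.le hy2.le]
    simp only [hg, Pi.add_apply, Pi.sub_apply, hu]
    push_cast at hE ⊢
    nlinarith) (by
    intro y hy
    simp only [if_neg hy]; exact le_rfl) x
  simp only [if_pos (show x ∈ B from ⟨ha1, hb1⟩), hg] at hmin
  have hab : (a:ℝ) < b := by exact_mod_cast (show a < b by omega)
  have h1 : ((x 0 : ℝ) - a) * (b - x 0) ≤ (((b:ℝ) - a) / 2) ^ 2 := by nlinarith [sq_nonneg ((x 0 : ℝ) - a - (b - x 0))]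
  have h2 : (((b:ℝ) - a) / 2) ^ 2 ≤ ((A.ncard + 1 : ℝ) / 2) ^ 2 := by
    have : (b:ℝ) - a ≤ A.ncard + 1 := by linarith
    have : 0 ≤ (b:ℝ) - a := by linarith
    gcongr
  linarith

lemma ballVol_one : ballVol 1 = 2 := by
  unfold ballVol
  rw [EuclideanSpace.volume_ball]
  simp only [Fintype.card_fin, ENNReal.ofReal_one, one_pow, one_mul, pow_one, Nat.cast_one]
  have : Real.Gamma (1 / 2 + 1) = Real.sqrt Real.pi / 2 := by
    rw [Real.Gamma_add_one (by norm_num), Real.Gamma_one_half_eq]; ring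
  rw [this]
  have hp : 0 < Real.sqrt Real.pi := Real.sqrt_pos.mpr Real.pi_pos
  rw [ENNReal.toReal_ofReal (by positivity)]
  field_simp

theorem isoperimetric_theorem (d : ℕ) (hd : 1 ≤ d) :
    ∃ C : ℝ, ∀ n : ℕ, 2 ≤ n → ∀ A : Set (Site d), A.Finite → A.ncard = n →
      ebar d A ≤ exitFun d (lball d n) 0
        + C * (n : ℝ) ^ ((2 : ℝ) / (d : ℝ) - gam d) * Real.log n ^ 2 := by
  have hlog : ∀ n : ℕ, 2 ≤ n → 1 ≤ 4 * Real.log n ^ 2 := by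
    intro n hn
    have h1 := Real.log_two_gt_d9
    have h2 : Real.log 2 ≤ Real.log n := Real.log_le_log (by norm_num) (by exact_mod_cast hn)
    nlinarith
  rcases Nat.lt_or_ge d 2 with h | h
  · obtain rfl : d = 1 := by omega
    refine ⟨4, fun n hn A hA hc => ?_⟩
    refine csSup_le (Set.range_nonempty _) ?_
    rintro _ ⟨x, rfl⟩
    have h1 := exit_one hA x
    have h2 := exitFun_lball_ge le_rfl n (d := 1)
    have hn2 : (2:ℝ) ≤ n := by exact_mod_cast hn
    have hr : radius 1 n = n / 2 := by
      have := radius_pow le_rfl (d := 1) (k := (n:ℝ)) (by positivity)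
      rw [ballVol_one, pow_one] at this
      linarith
    rw [hr] at h2
    rw [hc] at h1
    have h3 : (2:ℝ) / ((1:ℕ):ℝ) - gam 1 = 1 := by simp [gam]; norm_num
    rw [h3, Real.rpow_one]
    have h4 := mul_le_mul_of_nonneg_left (hlog n hn) (by positivity : (0:ℝ) ≤ n)
    nlinarith
  · obtain ⟨C, hC, hb⟩ := exit_asym h
    refine ⟨C * 4, fun n hn A hA hc => ?_⟩
    refine csSup_le (Set.range_nonempty _) ?_
    rintro _ ⟨x, rfl⟩
    have h1 := hb n (by omega) A hA hc x
    have h2 := exitFun_lball_ge hd n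
    have hn1 : (1:ℝ) ≤ n := by exact_mod_cast (by omega : 1 ≤ n)
    have h3 : (n:ℝ) ^ (4 / (3 * (d:ℝ))) ≤ (n:ℝ) ^ ((2:ℝ) / (d:ℝ) - gam d) :=
      Real.rpow_le_rpow_of_exponent_le hn1 (gam_le h)
    have h4 : C * (n:ℝ) ^ (4 / (3 * (d:ℝ))) ≤ C * (n:ℝ) ^ ((2:ℝ) / (d:ℝ) - gam d) := by gcongr
    have hp : 0 ≤ C * (n:ℝ) ^ ((2:ℝ) / (d:ℝ) - gam d) := by positivity
    have h5 := mul_le_mul_of_nonneg_left (hlog n hn) hp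
    linarith


end RotorRouterPaper
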